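/- arXiv:2112.14427 — 2 statements merged into one kernel-verified Lean document; each statement's English description precedes it below -/
import Mathlib

section
/- Let x ≥ 3, q a positive integer with 1 ≤ q ≤ x^{1/4}/(log x)^{3/2}, and a an integer with 1 ≤ a ≤ q. Let S(x;q,a) be the number of distinct values m = ⌊x/n⌋ (over positive integers n ≤ x) with m ≡ a (mod q). Then S(x;q,a) = 2√x/q + O((x/q)^{1/3} log x), with an absolute implied constant. -/
/-! With `M = ⌊√x⌋`, the floor set of `x` consists of the integers up to `M` and of the values
`⌊x / n⌋` for `n ≤ M`, which are pairwise distinct; only `M` itself can occur in both families. In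
the first family the residue class is hit `M / q + O(1)` times. In the second one the indicator of
the class is `1 / q` plus a difference of two sawtooth functions of `x / (q n)`, up to shifts by
constants, so everything rests on bounding `∑ ψ(R³ / n + c)` with `R = (x / q)^(1/3)`.

The sawtooth `ψ` is compared with difference quotients of its primitive, whose Fourier series
converges absolutely. This leaves exponential sums `∑ 𝐞(z / n)` over dyadic blocks `N ≤ n < 2 N`,
which are bounded by the Kusmin–Landau inequality when `2 z ≤ N²` and by van der Corput's second
derivative test otherwise. A block then contributes `O(R + N² / R³)`, and summing over the blocks
gives `O(R log x + q)`; the condition `q ≤ x^(1/4)` says precisely that `q ≤ R`. -/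

open Finset
open scoped FourierTransform Real fwdDiff

/-! ### Kusmin–Landau inequality -/

lemma norm_one_sub_fourierChar (t : ℝ) : ‖1 - (𝐞 t : ℂ)‖ = 2 * |Real.sin (π * t)| := by
  have h := Complex.norm_exp_I_mul_ofReal_sub_one (2 * π * t)
  rwa [mul_comm Complex.I, ← Real.fourierChar_apply, norm_sub_rev, Real.norm_eq_abs, abs_mul,
    abs_two, mul_assoc, mul_div_cancel_left₀ _ two_ne_zero] at h

lemma norm_fourierChar_sub_one_le (t : ℝ) : ‖(𝐞 t : ℂ) - 1‖ ≤ 2 * π * |t| := by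
  rw [norm_sub_rev, norm_one_sub_fourierChar, mul_assoc]
  gcongr
  calc |Real.sin (π * t)| ≤ |π * t| := Real.abs_sin_le_abs
    _ = π * |t| := by rw [abs_mul, abs_of_pos Real.pi_pos]

lemma fourierChar_intCast (k : ℤ) : 𝐞 k = 1 := by
  rw [Real.fourierChar_apply', mul_comm, Circle.exp_int_mul_two_pi]

lemma fourierChar_re (t : ℝ) : (𝐞 t : ℂ).re = Real.cos (2 * π * t) :=
  Complex.exp_ofReal_mul_I_re _

lemma two_mul_le_sin_pi_mul {θ t : ℝ} (hθ : 0 ≤ θ) (ht : t ∈ Set.Icc θ (1 - θ)) :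
    2 * θ ≤ Real.sin (π * t) := by
  have jordan {s : ℝ} (hs : 0 ≤ s) (hs' : s ≤ 1 / 2) : 2 * s ≤ Real.sin (π * s) := by
    calc 2 * s = 2 / π * (π * s) := by field_simp
      _ ≤ Real.sin (π * s) := Real.mul_le_sin (by positivity) (by nlinarith [Real.pi_pos])
  rcases le_total t (1 / 2) with h | h
  · linarith [ht.1, jordan (hθ.trans ht.1) h]
  · have hsymm := jordan (s := 1 - t) (by linarith [ht.2]) (by linarith)
    rw [mul_one_sub π, Real.sin_pi_sub] at hsymm
    linarith [ht.2]

lemma inv_one_sub_fourierChar {t : ℝ} (ht : (𝐞 t : ℂ) ≠ 1) :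
    (1 - (𝐞 t : ℂ))⁻¹ = 1 / 2 + (Real.cot (π * t) / 2 : ℝ) * Complex.I := by
  have hexp : Complex.exp (2 * π * Complex.I * t) = 𝐞 t := by
    rw [Real.fourierChar_apply]
    congr 1
    push_cast
    ring
  have hne : 1 - (𝐞 t : ℂ) ≠ 0 := sub_ne_zero.2 ht.symm
  push_cast
  rw [Complex.cot_pi_eq_exp_ratio, hexp]
  field_simp
  ring

section InvOneSub

variable {θ t : ℝ}

lemma norm_inv_one_sub_fourierChar_le (hθ : 0 < θ) (ht : t ∈ Set.Icc θ (1 - θ)) :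
    ‖(1 - (𝐞 t : ℂ))⁻¹‖ ≤ 1 / (4 * θ) := by
  have hsin := two_mul_le_sin_pi_mul hθ.le ht
  rw [norm_inv, norm_one_sub_fourierChar, ← one_div]
  exact one_div_le_one_div_of_le (by positivity) (by linarith [le_abs_self (Real.sin (π * t))])

lemma fourierChar_ne_one_of_mem_Icc (hθ : 0 < θ) (ht : t ∈ Set.Icc θ (1 - θ)) :
    (𝐞 t : ℂ) ≠ 1 := by
  have hsin := two_mul_le_sin_pi_mul hθ.le ht
  rw [ne_comm, ← sub_ne_zero, ← norm_pos_iff, norm_one_sub_fourierChar]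
  have : Real.sin (π * t) ≠ 0 := by linarith
  positivity

lemma abs_cot_pi_mul_le (hθ : 0 < θ) (ht : t ∈ Set.Icc θ (1 - θ)) :
    |Real.cot (π * t)| ≤ 1 / (2 * θ) := by
  have hsin := two_mul_le_sin_pi_mul hθ.le ht
  rw [Real.cot_eq_cos_div_sin, abs_div]
  gcongr
  · exact Real.abs_cos_le_one _
  · exact hsin.trans (le_abs_self _)

end InvOneSub

lemma antitoneOn_cot_pi_mul : AntitoneOn (fun t : ℝ ↦ Real.cot (π * t)) (Set.Ioo 0 1) := by
  intro s hs t ht hst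
  have sin_pos {r : ℝ} (hr : r ∈ Set.Ioo 0 1) : 0 < Real.sin (π * r) :=
    Real.sin_pos_of_pos_of_lt_pi (mul_pos Real.pi_pos hr.1) (by nlinarith [hr.2, Real.pi_pos])
  have hsub : 0 ≤ Real.sin (π * t - π * s) :=
    Real.sin_nonneg_of_nonneg_of_le_pi (by nlinarith [Real.pi_pos])
      (by nlinarith [Real.pi_pos, hs.1, ht.2])
  rw [Real.sin_sub] at hsub
  simp only [Real.cot_eq_cos_div_sin]
  rw [div_le_div_iff₀ (sin_pos ht) (sin_pos hs)]
  linarith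

lemma norm_inv_one_sub_fourierChar_sub_le {θ s t : ℝ} (hθ : 0 < θ) (hs : s ∈ Set.Icc θ (1 - θ))
    (ht : t ∈ Set.Icc θ (1 - θ)) (hst : s ≤ t) :
    ‖(1 - (𝐞 t : ℂ))⁻¹ - (1 - (𝐞 s : ℂ))⁻¹‖ ≤ (Real.cot (π * s) - Real.cot (π * t)) / 2 := by
  have hcot : Real.cot (π * t) ≤ Real.cot (π * s) :=
    antitoneOn_cot_pi_mul ⟨by linarith [hs.1], by linarith [hs.2]⟩
      ⟨by linarith [ht.1], by linarith [ht.2]⟩ hst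
  rw [inv_one_sub_fourierChar (fourierChar_ne_one_of_mem_Icc hθ hs),
    inv_one_sub_fourierChar (fourierChar_ne_one_of_mem_Icc hθ ht), add_sub_add_left_eq_sub,
    ← sub_mul, norm_mul, Complex.norm_I, mul_one, ← Complex.ofReal_sub, Complex.norm_real,
    Real.norm_eq_abs, abs_of_nonpos (by linarith)]
  linarith

lemma norm_sum_mul_sub_succ_le {R : Type*} [SeminormedRing R] (w E : ℕ → R)
    (hE : ∀ n, ‖E n‖ ≤ 1) (N : ℕ) :
    ‖∑ n ∈ range (N + 1), w n * (E n - E (n + 1))‖ ≤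
      2 * (‖w N‖ + ∑ n ∈ range N, ‖w (n + 1) - w n‖) := by
  have hdiff (n : ℕ) : ‖E 0 - E n‖ ≤ 2 := by
    linarith [norm_sub_le (E 0) (E n), hE 0, hE n]
  have hparts := sum_range_by_parts w (fun n ↦ E n - E (n + 1)) (N + 1)
  simp only [smul_eq_mul, sum_range_sub', Nat.add_sub_cancel] at hparts
  have hterm (v : R) (n : ℕ) : ‖v * (E 0 - E n)‖ ≤ ‖v‖ * 2 :=
    (norm_mul_le _ _).trans (by gcongr; exact hdiff n)
  calc ‖∑ n ∈ range (N + 1), w n * (E n - E (n + 1))‖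
      ≤ ‖w N * (E 0 - E (N + 1))‖ +
          ‖∑ n ∈ range N, (w (n + 1) - w n) * (E 0 - E (n + 1))‖ := by
        rw [hparts]
        exact norm_sub_le _ _
    _ ≤ ‖w N‖ * 2 + ∑ n ∈ range N, ‖w (n + 1) - w n‖ * 2 := by
        gcongr
        · exact hterm _ _
        · exact norm_sum_le_of_le _ fun n _ ↦ hterm _ _
    _ = 2 * (‖w N‖ + ∑ n ∈ range N, ‖w (n + 1) - w n‖) := by
        rw [← sum_mul]
        ring

/- With `w n = (1 - 𝐞 (Δ g n))⁻¹` one has `𝐞 (g n) = w n * (𝐞 (g n) - 𝐞 (g (n + 1)))`, and `w` has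
bounded variation since its real part is constant and its imaginary part is monotone. -/
lemma norm_sum_range_fourierChar_le {g : ℕ → ℝ} {N : ℕ} {θ : ℝ} (hθ : 0 < θ)
    (hd : ∀ n < N, Δ_[1] g n ∈ Set.Icc θ (1 - θ)) (hmono : MonotoneOn (Δ_[1] g) (Set.Iio N)) :
    ‖∑ n ∈ range N, (𝐞 (g n) : ℂ)‖ ≤ 3 / (2 * θ) := by
  rcases N with _ | N
  · simp only [range_zero, sum_empty, norm_zero]
    positivity
  set w : ℕ → ℂ := fun n ↦ (1 - (𝐞 (Δ_[1] g n) : ℂ))⁻¹ with hw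
  have heq : ∀ n ∈ range (N + 1), (𝐞 (g n) : ℂ) = w n * (𝐞 (g n) - 𝐞 (g (n + 1))) := by
    intro n hn
    have hne : 1 - (𝐞 (Δ_[1] g n) : ℂ) ≠ 0 :=
      sub_ne_zero.2 (fourierChar_ne_one_of_mem_Icc hθ (hd n (mem_range.1 hn))).symm
    have hsucc : (𝐞 (g (n + 1)) : ℂ) = 𝐞 (g n) * 𝐞 (Δ_[1] g n) := by
      rw [← Circle.coe_mul, ← AddChar.map_add_eq_mul, fwdDiff, add_sub_cancel]
    rw [hsucc, hw]
    field_simp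
  have hvar : ∑ n ∈ range N, ‖w (n + 1) - w n‖ ≤ 1 / (2 * θ) := by
    calc ∑ n ∈ range N, ‖w (n + 1) - w n‖
        ≤ ∑ n ∈ range N,
            (Real.cot (π * Δ_[1] g n) / 2 - Real.cot (π * Δ_[1] g (n + 1)) / 2) := by
          refine sum_le_sum fun n hn ↦ ?_
          have hn := mem_range.1 hn
          rw [← sub_div]
          exact norm_inv_one_sub_fourierChar_sub_le hθ (hd _ (by lia)) (hd _ (by lia))
            (hmono (Set.mem_Iio.2 (by lia)) (Set.mem_Iio.2 (by lia)) n.le_succ)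
      _ = Real.cot (π * Δ_[1] g 0) / 2 - Real.cot (π * Δ_[1] g N) / 2 := sum_range_sub' _ _
      _ ≤ 1 / (2 * θ) := by
          linarith [(abs_le.1 (abs_cot_pi_mul_le hθ (hd 0 N.succ_pos))).2,
            (abs_le.1 (abs_cot_pi_mul_le hθ (hd N N.lt_succ_self))).1]
  rw [sum_congr rfl heq]
  calc _ ≤ 2 * (‖w N‖ + ∑ n ∈ range N, ‖w (n + 1) - w n‖) :=
        norm_sum_mul_sub_succ_le w (fun n ↦ (𝐞 (g n) : ℂ)) (fun _ ↦ (Circle.norm_coe _).le) N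
    _ ≤ 2 * (1 / (4 * θ) + 1 / (2 * θ)) := by
        gcongr
        exact norm_inv_one_sub_fourierChar_le hθ (hd N N.lt_succ_self)
    _ = 3 / (2 * θ) := by
        field_simp
        norm_num

lemma exists_eq_Ico_of_ordConnected {s : Finset ℕ} (hs : (s : Set ℕ).OrdConnected) :
    ∃ a b, s = Ico a b := by
  rcases s.eq_empty_or_nonempty with rfl | hne
  · exact ⟨0, 0, (Ico_self 0).symm⟩
  · refine ⟨s.min' hne, s.max' hne + 1, ?_⟩
    ext l
    rw [mem_Ico, Nat.lt_succ_iff]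
    exact ⟨fun h ↦ ⟨s.min'_le l h, s.le_max' l h⟩,
      fun h ↦ hs.out (s.min'_mem hne) (s.max'_mem hne) h⟩

/-- The **Kusmin–Landau inequality**. -/
lemma norm_sum_fourierChar_le_of_fwdDiff_mem_Icc {g : ℕ → ℝ} {s : Finset ℕ}
    (hs : (s : Set ℕ).OrdConnected) {θ : ℝ} (hθ : 0 < θ) (k : ℤ)
    (hd : ∀ n ∈ s, Δ_[1] g n ∈ Set.Icc (k + θ) (k + 1 - θ)) (hmono : MonotoneOn (Δ_[1] g) s) :
    ‖∑ n ∈ s, (𝐞 (g n) : ℂ)‖ ≤ 3 / (2 * θ) := by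
  obtain ⟨a, b, rfl⟩ := exists_eq_Ico_of_ordConnected hs
  have hmem {n : ℕ} (hn : n < b - a) : a + n ∈ Ico a b := mem_Ico.2 (by lia)
  have hshift (n : ℕ) : 𝐞 (g (a + n)) = 𝐞 (g (a + n) - k * n) := by
    have hint : 𝐞 (k * n : ℝ) = 1 := mod_cast fourierChar_intCast (k * n)
    rw [← mul_one (𝐞 (g (a + n) - k * n)), ← hint, ← AddChar.map_add_eq_mul, sub_add_cancel]
  have hdiff (n : ℕ) :
      Δ_[1] (fun n : ℕ ↦ g (a + n) - k * n) n = Δ_[1] g (a + n) - k := by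
    simp only [fwdDiff, ← add_assoc]
    push_cast
    ring
  simp only [sum_Ico_eq_sum_range, hshift]
  refine norm_sum_range_fourierChar_le (g := fun n ↦ g (a + n) - k * n) hθ
    (fun n hn ↦ ?_) (fun m hm n hn hmn ↦ ?_)
  · have := hd _ (hmem hn)
    rw [hdiff]
    constructor <;> linarith [this.1, this.2]
  · rw [hdiff, hdiff]
    exact sub_le_sub_right (hmono (hmem hm) (hmem hn) (by lia)) _

/-! ### Van der Corput's second derivative test -/

lemma norm_sum_fourierChar_le_card {ι : Type*} (g : ι → ℝ) (s : Finset ι) :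
    ‖∑ n ∈ s, (𝐞 (g n) : ℂ)‖ ≤ #s :=
  (norm_sum_le s _).trans_eq (by simp only [Circle.norm_coe, sum_const, nsmul_one])

lemma card_le_of_monotoneOn_sub_mul {d : ℕ → ℝ} {s : Finset ℕ} {μ L : ℝ} (hμ : 0 < μ) (hL : 0 ≤ L)
    (hd : MonotoneOn (fun n ↦ d n - μ * n) s) (hrange : ∀ m ∈ s, ∀ n ∈ s, d n - d m ≤ L) :
    #s ≤ L / μ + 1 := by
  rcases s.eq_empty_or_nonempty with rfl | hs
  · simp only [card_empty, Nat.cast_zero]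
    positivity
  have hmin := s.min'_mem hs
  have hmax := s.max'_mem hs
  have hmin_max : s.min' hs ≤ s.max' hs := s.min'_le _ hmax
  have hcard : #s ≤ s.max' hs + 1 - s.min' hs := by
    rw [← Nat.card_Icc]
    exact card_le_card fun n hn ↦ mem_Icc.2 ⟨s.min'_le n hn, s.le_max' n hn⟩
  have hcard' : (#s : ℝ) ≤ s.max' hs - s.min' hs + 1 := by
    have : #s + s.min' hs ≤ s.max' hs + 1 := by lia
    have : (#s + s.min' hs : ℝ) ≤ s.max' hs + 1 := mod_cast this
    linarith
  have hlen : (s.max' hs - s.min' hs : ℝ) ≤ L / μ := by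
    rw [le_div_iff₀ hμ]
    linarith [hd hmin hmax hmin_max, hrange _ hmin _ hmax]
  linarith

lemma monotoneOn_of_monotoneOn_sub_mul {d : ℕ → ℝ} {s : Set ℕ} {μ : ℝ} (hμ : 0 ≤ μ)
    (hd : MonotoneOn (fun n ↦ d n - μ * n) s) : MonotoneOn d s := by
  have hlin : MonotoneOn (fun n : ℕ ↦ μ * n) s := fun m _ n _ hmn ↦ by
    simp only
    gcongr
  simpa only [sub_add_cancel] using hd.add hlin

lemma ordConnected_sep_of_monotoneOn {α β : Type*} [Preorder α] [Preorder β] {s : Set α}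
    (hs : s.OrdConnected) {d : α → β} (hd : MonotoneOn d s) {t : Set β} (ht : t.OrdConnected) :
    {n ∈ s | d n ∈ t}.OrdConnected := by
  refine ⟨fun m hm n hn l hl ↦ ?_⟩
  have hls : l ∈ s := hs.out hm.1 hn.1 hl
  exact ⟨hls, ht.out hm.2 hn.2 ⟨hd hm.1 hls hl.1, hd hls hn.1 hl.2⟩⟩

section VanDerCorput

variable {g : ℕ → ℝ} {s : Finset ℕ} {μ : ℝ}

lemma norm_sum_fourierChar_le_of_fwdDiff_sub_le_sqrt (hμ : 0 < μ)
    (hg : MonotoneOn (fun n ↦ Δ_[1] g n - μ * n) s)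
    (hrange : ∀ m ∈ s, ∀ n ∈ s, Δ_[1] g n - Δ_[1] g m ≤ √μ) :
    ‖∑ n ∈ s, (𝐞 (g n) : ℂ)‖ ≤ 1 / √μ + 1 := by
  calc ‖∑ n ∈ s, (𝐞 (g n) : ℂ)‖ ≤ #s := norm_sum_fourierChar_le_card g s
    _ ≤ √μ / μ + 1 := card_le_of_monotoneOn_sub_mul hμ μ.sqrt_nonneg hg hrange
    _ = 1 / √μ + 1 := by rw [Real.sqrt_div_self']

/- Points where `Δ g` lies within `√μ` of the integers `k` and `k + 1` are few; the other ones are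
covered by the Kusmin–Landau inequality. -/
lemma norm_sum_fourierChar_le_of_fwdDiff_mem_unit (hs : (s : Set ℕ).OrdConnected) (hμ : 0 < μ)
    (hg : MonotoneOn (fun n ↦ Δ_[1] g n - μ * n) s) (k : ℤ)
    (hk : ∀ n ∈ s, Δ_[1] g n ∈ Set.Icc (k : ℝ) (k + 1)) :
    ‖∑ n ∈ s, (𝐞 (g n) : ℂ)‖ ≤ 7 / (2 * √μ) + 2 := by
  have hd : MonotoneOn (Δ_[1] g) s := monotoneOn_of_monotoneOn_sub_mul hμ.le hg
  set low := {n ∈ s | Δ_[1] g n < k + √μ}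
  set high := {n ∈ s | ¬ Δ_[1] g n < k + √μ}
  have hlow : ‖∑ n ∈ low, (𝐞 (g n) : ℂ)‖ ≤ 1 / √μ + 1 := by
    refine norm_sum_fourierChar_le_of_fwdDiff_sub_le_sqrt hμ
      (hg.mono (filter_subset _ _)) fun m hm n hn ↦ ?_
    linarith [(hk m (filter_subset _ _ hm)).1, (mem_filter.1 hn).2]
  have htop : ‖∑ n ∈ high with k + 1 - √μ < Δ_[1] g n, (𝐞 (g n) : ℂ)‖ ≤ 1 / √μ + 1 := by
    refine norm_sum_fourierChar_le_of_fwdDiff_sub_le_sqrt hμ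
      (hg.mono ((filter_subset _ _).trans (filter_subset _ _))) fun m hm n hn ↦ ?_
    linarith [(hk n (filter_subset _ _ (filter_subset _ _ hn))).2, (mem_filter.1 hm).2]
  have hmid : ‖∑ n ∈ high with ¬ k + 1 - √μ < Δ_[1] g n, (𝐞 (g n) : ℂ)‖ ≤ 3 / (2 * √μ) := by
    have heq : ({n ∈ high | ¬ k + 1 - √μ < Δ_[1] g n} : Finset ℕ) =
        {n ∈ s | Δ_[1] g n ∈ Set.Icc (k + √μ) (k + 1 - √μ)} := by
      simp only [high, filter_filter, not_lt, Set.mem_Icc]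
    rw [heq]
    refine norm_sum_fourierChar_le_of_fwdDiff_mem_Icc ?_ (Real.sqrt_pos.2 hμ) k
      (fun n hn ↦ (mem_filter.1 hn).2) (hd.mono (filter_subset _ _))
    rw [coe_filter]
    exact ordConnected_sep_of_monotoneOn hs hd Set.ordConnected_Icc
  calc ‖∑ n ∈ s, (𝐞 (g n) : ℂ)‖
      = ‖∑ n ∈ low, (𝐞 (g n) : ℂ) + (∑ n ∈ high with k + 1 - √μ < Δ_[1] g n, (𝐞 (g n) : ℂ) +
          ∑ n ∈ high with ¬ k + 1 - √μ < Δ_[1] g n, (𝐞 (g n) : ℂ))‖ := by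
        rw [sum_filter_add_sum_filter_not, sum_filter_add_sum_filter_not]
    _ ≤ (1 / √μ + 1) + ((1 / √μ + 1) + 3 / (2 * √μ)) :=
        norm_add_le_of_le hlow (norm_add_le_of_le htop hmid)
    _ = 7 / (2 * √μ) + 2 := by
        field_simp
        ring

/-- A discrete form of **van der Corput's second derivative test**. -/
lemma norm_sum_fourierChar_le_of_le_fwdDiff_fwdDiff (hs : (s : Set ℕ).OrdConnected) (hμ : 0 < μ)
    (hg : ∀ n ∈ s, n + 1 ∈ s → μ ≤ Δ_[1] (Δ_[1] g) n) {A B : ℝ} (hAB : A ≤ B)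
    (hd : ∀ n ∈ s, Δ_[1] g n ∈ Set.Icc A B) :
    ‖∑ n ∈ s, (𝐞 (g n) : ℂ)‖ ≤ (B - A + 2) * (7 / (2 * √μ) + 2) := by
  have hsep : MonotoneOn (fun n ↦ Δ_[1] g n - μ * n) s := by
    refine monotoneOn_of_le_add_one hs fun n _ hn hn' ↦ ?_
    have := hg n hn hn'
    rw [fwdDiff] at this
    push_cast
    linarith
  have hfiber (k : ℤ) :
      ‖∑ n ∈ s with ⌊Δ_[1] g n⌋ = k, (𝐞 (g n) : ℂ)‖ ≤ 7 / (2 * √μ) + 2 := by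
    refine norm_sum_fourierChar_le_of_fwdDiff_mem_unit ?_ hμ
      (hsep.mono (filter_subset _ _)) k fun n hn ↦ ?_
    · rw [coe_filter]
      exact ordConnected_sep_of_monotoneOn hs (d := fun n ↦ ⌊Δ_[1] g n⌋) (t := {k})
        (Int.floor_mono.comp_monotoneOn (monotoneOn_of_monotoneOn_sub_mul hμ.le hsep))
        Set.ordConnected_singleton
    · obtain ⟨hle, hlt⟩ := Int.floor_eq_iff.1 (mem_filter.1 hn).2
      exact ⟨hle, hlt.le⟩
  have hmaps : ∀ n ∈ s, ⌊Δ_[1] g n⌋ ∈ Icc ⌊A⌋ ⌊B⌋ := fun n hn ↦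
    mem_Icc.2 ⟨Int.floor_mono (hd n hn).1, Int.floor_mono (hd n hn).2⟩
  have hcard : (#(Icc ⌊A⌋ ⌊B⌋) : ℝ) ≤ B - A + 2 := by
    have hfloor : ⌊A⌋ ≤ ⌊B⌋ := Int.floor_mono hAB
    have : (#(Icc ⌊A⌋ ⌊B⌋) : ℝ) = ⌊B⌋ + 1 - ⌊A⌋ :=
      mod_cast Int.card_Icc_of_le ⌊A⌋ ⌊B⌋ (by lia)
    linarith [Int.floor_le B, Int.lt_floor_add_one A]
  rw [← sum_fiberwise_of_maps_to hmaps]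
  calc _ ≤ ∑ _k ∈ Icc ⌊A⌋ ⌊B⌋, (7 / (2 * √μ) + 2) := norm_sum_le_of_le _ fun k _ ↦ hfiber k
    _ = #(Icc ⌊A⌋ ⌊B⌋) * (7 / (2 * √μ) + 2) := by rw [sum_const, nsmul_eq_mul]
    _ ≤ (B - A + 2) * (7 / (2 * √μ) + 2) := by gcongr

end VanDerCorput

/-! ### Sums of the sawtooth function -/

/-- The sawtooth function `ψ`: the periodized first Bernoulli polynomial. -/
noncomputable def sawtooth (t : ℝ) : ℝ :=
  Int.fract t - 1 / 2

/-- The mean-zero periodic primitive of `sawtooth`: half the periodized second Bernoulli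
polynomial. -/
noncomputable def sawtoothPrimitive (t : ℝ) : ℝ :=
  (Int.fract t ^ 2 - Int.fract t + 1 / 6) / 2

/- With `k = ⌊t + η⌋ - ⌊t⌋`, the difference of the two sides is
`k * (k - 1 + 2 * Int.fract (t + η)) / 2`, which is nonnegative because `k` is an integer. -/
lemma sawtoothPrimitive_add_sub_le (t η : ℝ) :
    sawtoothPrimitive (t + η) - sawtoothPrimitive t ≤ η * sawtooth t + η ^ 2 / 2 := by
  set k : ℤ := ⌊t + η⌋ - ⌊t⌋ with hk
  have hfract : Int.fract t = Int.fract (t + η) - η + k := by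
    rw [hk, Int.fract, Int.fract]
    push_cast
    ring
  have hv := Int.fract_nonneg (t + η)
  have hv' := Int.fract_lt_one (t + η)
  have hdefect : 0 ≤ (k : ℝ) * (k - 1 + 2 * Int.fract (t + η)) := by
    rcases lt_or_ge 0 k with h | h
    · have : (1 : ℝ) ≤ k := mod_cast h
      exact mul_nonneg (by linarith) (by linarith)
    rcases h.eq_or_lt with h | h
    · rw [h, Int.cast_zero, zero_mul]
    · have : (k : ℝ) ≤ -1 := mod_cast Int.le_sub_one_of_lt h
      exact mul_nonneg_of_nonpos_of_nonpos (by linarith) (by linarith)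
  rw [sawtoothPrimitive, sawtoothPrimitive, sawtooth, hfract]
  linarith

lemma hasSum_sawtoothPrimitive (t : ℝ) :
    HasSum (fun h : ℕ ↦ Real.cos (2 * π * ((h + 1 : ℕ) * t)) / (2 * π ^ 2 * (h + 1 : ℕ) ^ 2))
      (sawtoothPrimitive t) := by
  have hfract (h : ℕ) :
      Real.cos (2 * π * h * Int.fract t) = Real.cos (2 * π * (h * t)) := by
    rw [← Real.cos_add_int_mul_two_pi _ (h * ⌊t⌋), Int.fract]
    congr 1
    push_cast
    ring
  have hsum := hasSum_one_div_nat_pow_mul_cos one_ne_zero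
    (x := Int.fract t) ⟨Int.fract_nonneg t, (Int.fract_lt_one t).le⟩
  rw [mul_one, ← bernoulliFun, bernoulliFun_two] at hsum
  have hshift : HasSum (fun h : ℕ ↦ 1 / (2 * π ^ 2) *
      (1 / ((h + 1 : ℕ) : ℝ) ^ 2 * Real.cos (2 * π * (h + 1 : ℕ) * Int.fract t))) _ :=
    ((hasSum_nat_add_iff' 1).2 hsum).mul_left _
  convert hshift using 2 with h
  · rw [hfract]
    field_simp
  · rw [sum_range_one, Nat.cast_zero, sawtoothPrimitive]
    norm_num
    field_simp

lemma abs_sum_cos_shift_le {ι : Type*} (s : Finset ι) (u : ι → ℝ) (η : ℝ) :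
    |∑ n ∈ s, (Real.cos (2 * π * (u n + η)) - Real.cos (2 * π * u n))| ≤
      ‖(𝐞 η : ℂ) - 1‖ * ‖∑ n ∈ s, (𝐞 (u n) : ℂ)‖ := by
  have hre : ∑ n ∈ s, (Real.cos (2 * π * (u n + η)) - Real.cos (2 * π * u n)) =
      (((𝐞 η : ℂ) - 1) * ∑ n ∈ s, (𝐞 (u n) : ℂ)).re := by
    rw [mul_sum, Complex.re_sum]
    refine sum_congr rfl fun n _ ↦ ?_
    rw [← fourierChar_re, ← fourierChar_re, ← Complex.sub_re, AddChar.map_add_eq_mul,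
      Circle.coe_mul, sub_one_mul, mul_comm]
  rw [hre, ← norm_mul]
  exact Complex.abs_re_le_norm _

lemma norm_fourierChar_mul_sub_one_div_le {δ η m : ℝ} (hδ : 0 < δ) (hη : |η| ≤ δ) (hm : 0 < m) :
    ‖(𝐞 (m * η) : ℂ) - 1‖ / (2 * π ^ 2 * m ^ 2) ≤ δ * min (1 / m) (1 / (δ * m ^ 2)) := by
  have hπ : 1 ≤ π := by linarith [Real.pi_gt_three]
  have hlin : ‖(𝐞 (m * η) : ℂ) - 1‖ ≤ 2 * π * (m * δ) := by
    refine (norm_fourierChar_sub_one_le _).trans ?_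
    rw [abs_mul, abs_of_pos hm]
    gcongr
  have hconst : ‖(𝐞 (m * η) : ℂ) - 1‖ ≤ 2 := by
    refine (norm_sub_le _ _).trans_eq ?_
    rw [Circle.norm_coe, norm_one, one_add_one_eq_two]
  rw [mul_min_of_nonneg _ _ hδ.le, le_min_iff]
  constructor
  · calc _ ≤ 2 * π * (m * δ) / (2 * π ^ 2 * m ^ 2) := by gcongr
      _ = δ * (1 / m) / π := by field_simp
      _ ≤ δ * (1 / m) := div_le_self (by positivity) hπ
  · calc _ ≤ 2 / (2 * π ^ 2 * m ^ 2) := by gcongr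
      _ = δ * (1 / (δ * m ^ 2)) / π ^ 2 := by field_simp
      _ ≤ δ * (1 / (δ * m ^ 2)) := div_le_self (by positivity) (one_le_pow₀ hπ)

lemma sq_sub_sq_div_le_div_one_add_mul_sub {b c d : ℝ} (hd : 0 ≤ d) (hc : 0 ≤ c) (hb : 0 < b)
    (hcb : c ≤ b) :
    (b ^ 2 - c ^ 2) / (2 * b * (1 + d * b) ^ 2) ≤ b / (1 + d * b) - c / (1 + d * c) := by
  have hgap : b ^ 2 - c ^ 2 ≤ (b - c) * (2 * b) := by nlinarith [sq_nonneg (b - c)]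
  have hden : (1 + d * b) * (1 + d * c) ≤ (1 + d * b) ^ 2 := by
    rw [sq]
    gcongr
  calc _ ≤ (b - c) * (2 * b) / (2 * b * (1 + d * b) ^ 2) := by gcongr
    _ = (b - c) / (1 + d * b) ^ 2 := by field_simp
    _ ≤ (b - c) / ((1 + d * b) * (1 + d * c)) := by
        have := sub_nonneg.2 hcb
        gcongr
    _ = b / (1 + d * b) - c / (1 + d * c) := by
        field_simp
        ring

/- The right-hand side is an increment of `h ↦ 8 * √h / (1 + √δ * √h)`, whose derivative
`4 / (√h * (1 + √δ * √h) ^ 2)` is of the size of the left-hand side. -/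
lemma min_mul_sqrt_le {δ : ℝ} (hδ : 0 < δ) {h : ℝ} (hh : 0 ≤ h) :
    min (1 / (h + 1)) (1 / (δ * (h + 1) ^ 2)) * √(h + 1) ≤
      8 * (√(h + 1) / (1 + √δ * √(h + 1)) - √h / (1 + √δ * √h)) := by
  obtain ⟨d, hd, rfl⟩ : ∃ d, 0 < d ∧ δ = d ^ 2 :=
    ⟨√δ, Real.sqrt_pos.2 hδ, (Real.sq_sqrt hδ.le).symm⟩
  rw [Real.sqrt_sq hd.le]
  set b := √(h + 1)
  set c := √h
  have hb : h + 1 = b ^ 2 := (Real.sq_sqrt (by positivity)).symm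
  have hc : h = c ^ 2 := (Real.sq_sqrt hh).symm
  have hb₀ : 0 < b := Real.sqrt_pos.2 (by positivity)
  have hc₀ : 0 ≤ c := Real.sqrt_nonneg h
  have hcb : c ≤ b := Real.sqrt_le_sqrt (by linarith)
  have hincr : 1 / (2 * b * (1 + d * b) ^ 2) ≤ b / (1 + d * b) - c / (1 + d * c) := by
    have hbc : b ^ 2 - c ^ 2 = 1 := by linarith
    simpa only [hbc] using sq_sub_sq_div_le_div_one_add_mul_sub hd.le hc₀ hb₀ hcb
  refine le_trans ?_ (mul_le_mul_of_nonneg_left hincr (by norm_num))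
  rw [hb]
  rcases le_total (d * b) 1 with hdb | hdb
  · calc _ ≤ 1 / b ^ 2 * b := by
          gcongr
          exact min_le_left _ _
      _ = 8 * (1 / (2 * b * 2 ^ 2)) := by
          field_simp
          norm_num
      _ ≤ 8 * (1 / (2 * b * (1 + d * b) ^ 2)) := by
          gcongr
          linarith
  · calc _ ≤ 1 / (d ^ 2 * (b ^ 2) ^ 2) * b := by
          gcongr
          exact min_le_right _ _
      _ = 8 * (1 / (2 * b * (d * b + d * b) ^ 2)) := by
          field_simp
          norm_num
      _ ≤ 8 * (1 / (2 * b * (1 + d * b) ^ 2)) := by gcongr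

lemma sum_min_mul_sqrt_le {δ : ℝ} (hδ : 0 < δ) (n : ℕ) :
    ∑ h ∈ range n, min (1 / ((h + 1 : ℕ) : ℝ)) (1 / (δ * (h + 1 : ℕ) ^ 2)) * √(h + 1 : ℕ) ≤
      8 / √δ := by
  set F : ℕ → ℝ := fun h ↦ 8 * (√h / (1 + √δ * √h)) with hF
  have hterm (h : ℕ) :
      min (1 / ((h + 1 : ℕ) : ℝ)) (1 / (δ * (h + 1 : ℕ) ^ 2)) * √(h + 1 : ℕ) ≤
        F (h + 1) - F h := by
    simp only [hF]
    push_cast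
    exact (min_mul_sqrt_le hδ h.cast_nonneg).trans_eq (mul_sub _ _ _)
  have hδ' : 0 < √δ := Real.sqrt_pos.2 hδ
  calc _ ≤ ∑ h ∈ range n, (F (h + 1) - F h) := sum_le_sum fun h _ ↦ hterm h
    _ = F n := by
        rw [sum_range_sub, hF]
        simp only [Nat.cast_zero, Real.sqrt_zero, zero_div, mul_zero, sub_zero]
    _ ≤ 8 * (1 / √δ) := by
        simp only [hF]
        gcongr 8 * ?_
        rw [div_le_div_iff₀ (by positivity) hδ']
        linarith
    _ = 8 / √δ := mul_one_div _ _

lemma sum_one_div_succ_sq_le (n : ℕ) : ∑ h ∈ range n, 1 / ((h + 1 : ℕ) : ℝ) ^ 2 ≤ 2 := by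
  calc _ = ∑ h ∈ Ioo 0 (n + 1), ((h : ℝ) ^ 2)⁻¹ := by
        simp only [one_div]
        rw [range_eq_Ico, sum_Ico_add' (fun h : ℕ ↦ ((h : ℝ) ^ 2)⁻¹)]
        rfl
    _ ≤ 2 / ((0 : ℕ) + 1) := sum_Ioo_inv_sq_le 0 (n + 1)
    _ = 2 := by norm_num

lemma abs_le_of_hasSum_of_sum_range_abs_le {f : ℕ → ℝ} {a B : ℝ} (hf : HasSum f a)
    (hB : ∀ n, ∑ h ∈ range n, |f h| ≤ B) : |a| ≤ B :=
  le_of_tendsto hf.tendsto_sum_nat.abs (.of_forall fun n ↦ (abs_sum_le_sum_abs _ _).trans (hB n))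

section SumSawtooth

variable {ι : Type*} (s : Finset ι) (u : ι → ℝ) {δ K₁ K₂ : ℝ}

lemma abs_sum_sawtoothPrimitive_shift_le (hδ : 0 < δ) (hK₁ : 0 ≤ K₁) (hK₂ : 0 ≤ K₂)
    (hexp : ∀ h : ℕ, 1 ≤ h → ‖∑ n ∈ s, (𝐞 (h * u n) : ℂ)‖ ≤ K₁ * √h + K₂ / h)
    {η : ℝ} (hη : |η| ≤ δ) :
    |∑ n ∈ s, (sawtoothPrimitive (u n + η) - sawtoothPrimitive (u n))| ≤
      δ * (8 * K₁ / √δ + 2 * K₂) := by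
  set w : ℕ → ℝ := fun m ↦ min (1 / (m : ℝ)) (1 / (δ * m ^ 2))
  have hterm (m : ℕ) (hm : 1 ≤ m) :
      |∑ n ∈ s, (Real.cos (2 * π * (m * (u n + η))) / (2 * π ^ 2 * m ^ 2) -
        Real.cos (2 * π * (m * u n)) / (2 * π ^ 2 * m ^ 2))| ≤
      δ * (K₁ * (w m * √m) + K₂ * (1 / (m : ℝ) ^ 2)) := by
    have hm₀ : (0 : ℝ) < m := mod_cast hm
    simp only [← sub_div, ← sum_div, mul_add (m : ℝ)]
    rw [abs_div, abs_of_pos (show 0 < 2 * π ^ 2 * (m : ℝ) ^ 2 by positivity)]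
    calc _ ≤ ‖(𝐞 (m * η) : ℂ) - 1‖ * ‖∑ n ∈ s, (𝐞 (m * u n) : ℂ)‖ / (2 * π ^ 2 * m ^ 2) := by
          gcongr
          exact abs_sum_cos_shift_le s _ _
      _ = ‖(𝐞 (m * η) : ℂ) - 1‖ / (2 * π ^ 2 * m ^ 2) * ‖∑ n ∈ s, (𝐞 (m * u n) : ℂ)‖ := by ring
      _ ≤ δ * w m * (K₁ * √m + K₂ / m) := by
          gcongr
          · exact norm_fourierChar_mul_sub_one_div_le hδ hη hm₀
          · exact hexp m hm
      _ = δ * (K₁ * (w m * √m) + K₂ * (w m / m)) := by ring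
      _ ≤ δ * (K₁ * (w m * √m) + K₂ * (1 / m / m)) := by
          gcongr
          exact min_le_left _ _
      _ = _ := by rw [div_div, sq]
  refine abs_le_of_hasSum_of_sum_range_abs_le (hasSum_sum fun n _ ↦
    (hasSum_sawtoothPrimitive (u n + η)).sub (hasSum_sawtoothPrimitive (u n))) fun N ↦ ?_
  calc _ ≤ ∑ h ∈ range N,
          δ * (K₁ * (w (h + 1) * √(h + 1 : ℕ)) + K₂ * (1 / ((h + 1 : ℕ) : ℝ) ^ 2)) :=
        sum_le_sum fun h _ ↦ hterm (h + 1) h.succ_pos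
    _ = δ * (K₁ * ∑ h ∈ range N, w (h + 1) * √(h + 1 : ℕ) +
          K₂ * ∑ h ∈ range N, 1 / ((h + 1 : ℕ) : ℝ) ^ 2) := by
        rw [← mul_sum, sum_add_distrib, ← mul_sum, ← mul_sum]
    _ ≤ δ * (K₁ * (8 / √δ) + K₂ * 2) := by
        gcongr
        · exact sum_min_mul_sqrt_le hδ N
        · exact sum_one_div_succ_sq_le N
    _ = δ * (8 * K₁ / √δ + 2 * K₂) := by ring

lemma abs_sum_sawtooth_le (hδ : 0 < δ) (hK₁ : 0 ≤ K₁) (hK₂ : 0 ≤ K₂)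
    (hexp : ∀ h : ℕ, 1 ≤ h → ‖∑ n ∈ s, (𝐞 (h * u n) : ℂ)‖ ≤ K₁ * √h + K₂ / h) :
    |∑ n ∈ s, sawtooth (u n)| ≤ δ / 2 * #s + (8 * K₁ / √δ + 2 * K₂) := by
  have hlower (η : ℝ) (hη : |η| = δ) :
      -(δ * (8 * K₁ / √δ + 2 * K₂)) ≤ η * ∑ n ∈ s, sawtooth (u n) + δ ^ 2 / 2 * #s := by
    calc _ ≤ ∑ n ∈ s, (sawtoothPrimitive (u n + η) - sawtoothPrimitive (u n)) :=
          (abs_le.1 (abs_sum_sawtoothPrimitive_shift_le s u hδ hK₁ hK₂ hexp hη.le)).1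
      _ ≤ ∑ n ∈ s, (η * sawtooth (u n) + δ ^ 2 / 2) := by
          refine sum_le_sum fun n _ ↦ ?_
          rw [← hη, sq_abs]
          exact sawtoothPrimitive_add_sub_le _ _
      _ = η * ∑ n ∈ s, sawtooth (u n) + δ ^ 2 / 2 * #s := by
          rw [sum_add_distrib, ← mul_sum, sum_const, nsmul_eq_mul, mul_comm (#s : ℝ)]
  have hpos := hlower δ (abs_of_pos hδ)
  have hneg := hlower (-δ) (by rw [abs_neg, abs_of_pos hδ])
  rw [abs_le]
  constructor <;> refine le_of_mul_le_mul_left ?_ hδ <;> linarith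

end SumSawtooth

/-! ### The phase `z / n` -/

lemma ordConnected_coe_Ico (m n : ℕ) : ((Ico m n : Finset ℕ) : Set ℕ).OrdConnected := by
  rw [coe_Ico]
  exact Set.ordConnected_Ico

lemma card_Ico_le_of_le_two_mul {N N' : ℕ} (hN' : N' ≤ 2 * N) : #(Ico N N') ≤ N := by
  rw [Nat.card_Ico]
  lia

lemma fwdDiff_div_natCast (z : ℝ) {n : ℕ} (hn : n ≠ 0) :
    Δ_[1] (fun n : ℕ ↦ z / n) n = -(z / (n * (n + 1))) := by
  simp only [fwdDiff]
  push_cast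
  field_simp
  ring

lemma fwdDiff_fwdDiff_div_natCast (z : ℝ) {n : ℕ} (hn : n ≠ 0) :
    Δ_[1] (Δ_[1] fun n : ℕ ↦ z / n) n = 2 * z / (n * (n + 1) * (n + 2)) := by
  rw [fwdDiff, fwdDiff_div_natCast z hn, fwdDiff_div_natCast z n.succ_ne_zero]
  push_cast
  field_simp
  ring

section DyadicBlock

variable {z : ℝ} {N N' n : ℕ}

lemma fwdDiff_div_natCast_mem_Icc (hz : 0 ≤ z) (hN : 1 ≤ N) (hN' : N' ≤ 2 * N)
    (hn : n ∈ Ico N N') :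
    Δ_[1] (fun n : ℕ ↦ z / n) n ∈ Set.Icc (-(z / N ^ 2)) (-(z / (4 * N ^ 2))) := by
  obtain ⟨hle, hlt⟩ := mem_Ico.1 hn
  have hN₀ : (0 : ℝ) < N := mod_cast hN
  have hle' : (N : ℝ) ≤ n := mod_cast hle
  have hlt' : (n + 1 : ℝ) ≤ 2 * N := mod_cast (by lia : n + 1 ≤ 2 * N)
  have hn₀ : (0 : ℝ) < n := hN₀.trans_le hle'
  rw [fwdDiff_div_natCast z (by lia)]
  constructor
  · gcongr -(z / ?_)
    nlinarith
  · gcongr -(z / ?_)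
    nlinarith

lemma le_fwdDiff_fwdDiff_div_natCast (hz : 0 ≤ z) (hN : 1 ≤ N) (hn : N ≤ n)
    (hn' : n + 2 ≤ 2 * N) :
    z / (4 * N ^ 3) ≤ Δ_[1] (Δ_[1] fun n : ℕ ↦ z / n) n := by
  have hn₀ : (0 : ℝ) < n := mod_cast hN.trans hn
  have hn'' : (n + 2 : ℝ) ≤ 2 * N := mod_cast hn'
  rw [fwdDiff_fwdDiff_div_natCast z (by lia)]
  calc z / (4 * N ^ 3) = 2 * z / (2 * N * (2 * N) * (2 * N)) := by
        field_simp
        norm_num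
    _ ≤ 2 * z / (n * (n + 1) * (n + 2)) := by
        gcongr <;> linarith

lemma norm_sum_fourierChar_div_natCast_le_of_two_mul_le_sq (hz : 0 < z) (hN : 1 ≤ N)
    (hN' : N' ≤ 2 * N) (hzN : 2 * z ≤ N ^ 2) :
    ‖∑ n ∈ Ico N N', (𝐞 (z / n) : ℂ)‖ ≤ 6 * N ^ 2 / z := by
  have : (0 : ℝ) < N := mod_cast hN
  have hmono : MonotoneOn (Δ_[1] fun n : ℕ ↦ z / n) (Ico N N') := by
    refine monotoneOn_of_le_add_one (ordConnected_coe_Ico N N') fun n _ hn hn' ↦ ?_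
    rw [← sub_nonneg]
    have := mem_Ico.1 hn
    have := mem_Ico.1 hn'
    exact le_trans (by positivity) (le_fwdDiff_fwdDiff_div_natCast hz.le hN (by lia) (by lia))
  have hrange : ∀ n ∈ Ico N N', Δ_[1] (fun n : ℕ ↦ z / n) n ∈
      Set.Icc (((-1 : ℤ) : ℝ) + z / (4 * N ^ 2)) ((-1 : ℤ) + 1 - z / (4 * N ^ 2)) := by
    intro n hn
    obtain ⟨hlow, hhigh⟩ := fwdDiff_div_natCast_mem_Icc hz.le hN hN' hn
    have hhalf : z / N ^ 2 ≤ 1 / 2 := by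
      rw [div_le_div_iff₀ (by positivity) two_pos]
      linarith
    have hquarter : z / (4 * N ^ 2) = z / N ^ 2 / 4 := by rw [mul_comm, div_div]
    push_cast
    constructor <;> linarith
  calc _ ≤ 3 / (2 * (z / (4 * N ^ 2))) :=
        norm_sum_fourierChar_le_of_fwdDiff_mem_Icc (ordConnected_coe_Ico N N')
          (by positivity) (-1) hrange hmono
    _ = 6 * N ^ 2 / z := by
        field_simp
        norm_num

lemma norm_sum_fourierChar_div_natCast_le_of_sq_le_two_mul (hz : 0 < z) (hN : 1 ≤ N)
    (hN' : N' ≤ 2 * N) (hzN : N ^ 2 ≤ 2 * z) :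
    ‖∑ n ∈ Ico N N', (𝐞 (z / n) : ℂ)‖ ≤ 45 * √(z / N) := by
  have hN₀ : (0 : ℝ) < N := mod_cast hN
  set y := √(z / N)
  have hy : 0 < y := Real.sqrt_pos.2 (by positivity)
  have hzy : z = N * y ^ 2 := by
    rw [Real.sq_sqrt (by positivity), mul_div_cancel₀ _ hN₀.ne']
  rcases le_total (N : ℝ) y with hNy | hyN
  · calc _ ≤ (#(Ico N N') : ℝ) := norm_sum_fourierChar_le_card _ _
      _ ≤ N := mod_cast card_Ico_le_of_le_two_mul hN'
      _ ≤ 45 * y := by linarith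
  have hsqrt : √(z / (4 * N ^ 3)) = y / (2 * N) := by
    rw [Real.sqrt_eq_iff_mul_self_eq_of_pos (by positivity), hzy]
    field_simp
    norm_num
  have htest := norm_sum_fourierChar_le_of_le_fwdDiff_fwdDiff (g := fun n : ℕ ↦ z / n)
    (ordConnected_coe_Ico N N') (μ := z / (4 * N ^ 3)) (by positivity)
    (fun n hn hn' ↦ le_fwdDiff_fwdDiff_div_natCast hz.le hN (mem_Ico.1 hn).1
      (by have := mem_Ico.1 hn'; lia))
    (A := -(z / N ^ 2)) (B := 0) (by rw [Left.neg_nonpos_iff]; positivity)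
    (fun n hn ↦ Set.Icc_subset_Icc_right (by rw [Left.neg_nonpos_iff]; positivity)
      (fwdDiff_div_natCast_mem_Icc hz.le hN hN' hn))
  have hlength : 1 ≤ 2 * (z / N ^ 2) := by
    rw [← mul_div_assoc, one_le_div (by positivity)]
    exact hzN
  have hratio : 1 ≤ N / y := (one_le_div hy).2 hyN
  calc _ ≤ (0 - -(z / N ^ 2) + 2) * (7 / (2 * (y / (2 * N))) + 2) := by rwa [hsqrt] at htest
    _ = (z / N ^ 2 + 2) * (7 * (N / y) + 2) := by
        field_simp
        ring
    _ ≤ (z / N ^ 2 + 2 * (2 * (z / N ^ 2))) * (7 * (N / y) + 2 * (N / y)) := by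
        gcongr <;> linarith
    _ = 45 * y := by
        rw [hzy]
        field_simp
        ring

lemma norm_sum_fourierChar_div_natCast_le (hz : 0 < z) (hN : 1 ≤ N) (hN' : N' ≤ 2 * N) :
    ‖∑ n ∈ Ico N N', (𝐞 (z / n) : ℂ)‖ ≤ 45 * √(z / N) + 6 * N ^ 2 / z := by
  rcases le_total (2 * z) (N ^ 2) with h | h
  · exact (norm_sum_fourierChar_div_natCast_le_of_two_mul_le_sq hz hN hN' h).trans
      (le_add_of_nonneg_left (by positivity))
  · exact (norm_sum_fourierChar_div_natCast_le_of_sq_le_two_mul hz hN hN' h).trans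
      (le_add_of_nonneg_right (by positivity))

end DyadicBlock

section SawtoothDiv

variable {R : ℝ} (hR : 0 < R) (c : ℝ)
include hR

lemma abs_sum_sawtooth_div_natCast_dyadic_le {N N' : ℕ} (hN : 1 ≤ N) (hN' : N' ≤ 2 * N) :
    |∑ n ∈ Ico N N', sawtooth (R ^ 3 / n + c)| ≤ 361 * R + 12 * N ^ 2 / R ^ 3 := by
  have : (0 : ℝ) < N := mod_cast hN
  have hexp (h : ℕ) (hh : 1 ≤ h) :
      ‖∑ n ∈ Ico N N', (𝐞 (h * (R ^ 3 / n + c)) : ℂ)‖ ≤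
        45 * √(R ^ 3 / N) * √h + 6 * N ^ 2 / R ^ 3 / h := by
    have : (0 : ℝ) < h := mod_cast hh
    have hphase (n : ℕ) : (𝐞 (h * (R ^ 3 / n + c)) : ℂ) = 𝐞 (h * R ^ 3 / n) * 𝐞 (h * c) := by
      rw [mul_add, mul_div_assoc, AddChar.map_add_eq_mul, Circle.coe_mul]
    simp only [hphase]
    rw [← sum_mul, norm_mul, Circle.norm_coe, mul_one]
    calc _ ≤ 45 * √(h * R ^ 3 / N) + 6 * N ^ 2 / (h * R ^ 3) :=
          norm_sum_fourierChar_div_natCast_le (by positivity) hN hN'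
      _ = 45 * √(R ^ 3 / N) * √h + 6 * N ^ 2 / R ^ 3 / h := by
          rw [mul_comm (h : ℝ), mul_div_right_comm, Real.sqrt_mul (by positivity), div_div,
            mul_assoc]
  have hcard : (#(Ico N N') : ℝ) ≤ N := mod_cast card_Ico_le_of_le_two_mul hN'
  have hsqrt : √(R ^ 3 / N) / √(R / N) = R := by
    rw [← Real.sqrt_div (by positivity), Real.sqrt_eq_iff_mul_self_eq_of_pos hR]
    field_simp
  calc _ ≤ R / N / 2 * #(Ico N N') +
          (8 * (45 * √(R ^ 3 / N)) / √(R / N) + 2 * (6 * N ^ 2 / R ^ 3)) :=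
        abs_sum_sawtooth_le _ _ (by positivity) (by positivity) (by positivity) hexp
    _ ≤ R / N / 2 * N + (8 * (45 * √(R ^ 3 / N)) / √(R / N) + 2 * (6 * N ^ 2 / R ^ 3)) := by
        gcongr
    _ = R / 2 + 360 * (√(R ^ 3 / N) / √(R / N)) + 12 * N ^ 2 / R ^ 3 := by
        field_simp
        ring
    _ ≤ 361 * R + 12 * N ^ 2 / R ^ 3 := by
        rw [hsqrt]
        linarith

lemma abs_sum_Ico_sawtooth_div_natCast_le (J : ℕ) {M : ℕ} (hM : M ≤ 2 ^ J) :
    |∑ n ∈ Ico 1 M, sawtooth (R ^ 3 / n + c)| ≤ 361 * R * J + 4 * 4 ^ J / R ^ 3 := by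
  induction J generalizing M with
  | zero =>
    rw [Ico_eq_empty (by lia), sum_empty, abs_zero]
    positivity
  | succ J ih =>
    have hfour : (4 : ℝ) ^ J = ((2 ^ J : ℕ) : ℝ) ^ 2 := by
      push_cast
      rw [← pow_mul, mul_comm, pow_mul]
      norm_num
    have hgoal : 361 * R * J + 4 * 4 ^ J / R ^ 3 +
        (361 * R + 12 * ((2 ^ J : ℕ) : ℝ) ^ 2 / R ^ 3) =
          361 * R * (J + 1 : ℕ) + 4 * 4 ^ (J + 1) / R ^ 3 := by
      rw [← hfour]
      push_cast
      ring
    rw [← hgoal]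
    rcases le_total M (2 ^ J) with h | h
    · exact (ih h).trans (le_add_of_nonneg_right (by positivity))
    · rw [← sum_Ico_consecutive _ Nat.one_le_two_pow h]
      exact (abs_add_le _ _).trans (add_le_add (ih le_rfl)
        (abs_sum_sawtooth_div_natCast_dyadic_le hR c Nat.one_le_two_pow (by lia)))

lemma abs_sum_Icc_sawtooth_div_natCast_le {M : ℕ} (hM : 1 ≤ M) :
    |∑ n ∈ Icc 1 M, sawtooth (R ^ 3 / n + c)| ≤
      361 * R * (Nat.log 2 M + 1 : ℕ) + 16 * M ^ 2 / R ^ 3 := by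
  have hpow : (2 : ℝ) ^ Nat.log 2 M ≤ M := mod_cast Nat.pow_log_le_self 2 (by lia)
  have hfour : (4 : ℝ) ^ (Nat.log 2 M + 1) = 4 * (2 ^ Nat.log 2 M) ^ 2 := by
    rw [pow_succ', ← pow_mul, mul_comm (Nat.log 2 M), pow_mul]
    norm_num
  calc _ ≤ 361 * R * (Nat.log 2 M + 1 : ℕ) + 4 * 4 ^ (Nat.log 2 M + 1) / R ^ 3 :=
        abs_sum_Ico_sawtooth_div_natCast_le hR c _ (Nat.lt_pow_succ_log_self one_lt_two M)
    _ ≤ 361 * R * (Nat.log 2 M + 1 : ℕ) + 4 * (4 * M ^ 2) / R ^ 3 := by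
        rw [hfour]
        gcongr
    _ = _ := by ring

end SawtoothDiv

lemma one_le_log_of_three_le {x : ℝ} (hx : 3 ≤ x) : 1 ≤ Real.log x := by
  rw [Real.le_log_iff_exp_le (by linarith)]
  linarith [Real.exp_one_lt_d9]

lemma natLog_two_add_one_le_two_mul_log {x : ℝ} (hx : 3 ≤ x) {M : ℕ} (hM : 1 ≤ M)
    (hMx : (M : ℝ) ^ 2 ≤ x) : ((Nat.log 2 M + 1 : ℕ) : ℝ) ≤ 2 * Real.log x := by
  have : (0 : ℝ) < M := mod_cast hM
  have hlogx := one_le_log_of_three_le hx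
  have hlogM : 2 * Real.log M ≤ Real.log x := by
    have := Real.log_le_log (by positivity) hMx
    rwa [Real.log_pow] at this
  have hlogb : (Nat.log 2 M : ℝ) * Real.log 2 ≤ Real.log M := by
    rw [← le_div_iff₀ (Real.log_pos one_lt_two)]
    exact mod_cast Real.natLog_le_logb M 2
  push_cast
  nlinarith [Real.log_two_gt_d9, (Nat.log 2 M).cast_nonneg (α := ℝ)]

/-! ### The floor set -/

/-- The floor set `S(x)`, that is, the set of the values `⌊x / n⌋` with `1 ≤ n ≤ x`. -/
noncomputable def floorSet (x : ℝ) : Finset ℕ :=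
  (Icc 1 ⌊x⌋₊).image fun n : ℕ ↦ ⌊x / (n : ℝ)⌋₊

section NatDiv

variable {X M m : ℕ}

lemma div_div_self_of_sq_le (hm : 1 ≤ m) (hmX : m ^ 2 ≤ X) : X / (X / m) = m := by
  have hmul : m * m ≤ X := by rwa [← sq]
  have hle : m ≤ X / m := (Nat.le_div_iff_mul_le hm).2 hmul
  have hlt : X < m * (X / m) + m := by
    have := Nat.div_add_mod X m
    have := Nat.mod_lt X hm
    lia
  refine Nat.div_eq_of_lt_le (Nat.mul_div_le X m) ?_
  rw [Nat.succ_mul]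
  lia

lemma image_div_Icc_eq_union (hM : M ^ 2 ≤ X) (hX : X < (M + 1) ^ 2) :
    (Icc 1 X).image (X / ·) = (Icc 1 M).image (X / ·) ∪ Icc 1 M := by
  have hMX : M ≤ X := (Nat.le_self_pow two_ne_zero M).trans hM
  ext m
  simp only [mem_union, mem_image, mem_Icc]
  constructor
  · rintro ⟨n, hn, rfl⟩
    rcases le_or_gt n M with h | h
    · exact .inl ⟨n, ⟨hn.1, h⟩, rfl⟩
    · refine .inr ⟨Nat.div_pos hn.2 hn.1, Nat.lt_succ_iff.1 ?_⟩
      rw [Nat.div_lt_iff_lt_mul hn.1]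
      nlinarith
  · rintro (⟨n, hn, rfl⟩ | hm)
    · exact ⟨n, ⟨hn.1, hn.2.trans hMX⟩, rfl⟩
    · have hself := div_div_self_of_sq_le hm.1 ((Nat.pow_le_pow_left hm.2 2).trans hM)
      exact ⟨X / m, ⟨Nat.div_pos (hm.2.trans hMX) hm.1, Nat.div_le_self X m⟩, hself⟩

lemma card_filter_image_div_bounds (hM : M ^ 2 ≤ X) (hX : X < (M + 1) ^ 2) (p : ℕ → Prop)
    [DecidablePred p] :
    #{m ∈ (Icc 1 X).image (X / ·) | p m} ≤ #{n ∈ Icc 1 M | p (X / n)} + #{m ∈ Icc 1 M | p m} ∧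
      #{n ∈ Icc 1 M | p (X / n)} + #{m ∈ Icc 1 M | p m} ≤
        #{m ∈ (Icc 1 X).image (X / ·) | p m} + 1 := by
  have hinj : Set.InjOn (X / ·) (Icc 1 M : Set ℕ) := by
    refine Set.LeftInvOn.injOn (f₁' := (X / ·)) fun m hm ↦ ?_
    rw [coe_Icc] at hm
    exact div_div_self_of_sq_le hm.1 ((Nat.pow_le_pow_left hm.2 2).trans hM)
  have himage : #{m ∈ (Icc 1 M).image (X / ·) | p m} = #{n ∈ Icc 1 M | p (X / n)} := by
    rw [filter_image]
    exact card_image_of_injOn (hinj.mono (filter_subset _ _))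
  have hinter : {m ∈ (Icc 1 M).image (X / ·) | p m} ∩ {m ∈ Icc 1 M | p m} ⊆ {M} := by
    intro m hm
    simp only [mem_inter, mem_filter, mem_image, mem_Icc] at hm
    obtain ⟨⟨⟨n, hn, rfl⟩, -⟩, hle, -⟩ := hm
    have hge : M ≤ X / n := (Nat.le_div_iff_mul_le hn.1).2 (by nlinarith)
    exact mem_singleton.2 (hle.2.antisymm hge)
  have hcard := card_union_add_card_inter {m ∈ (Icc 1 M).image (X / ·) | p m}
    {m ∈ Icc 1 M | p m}
  have hinter_card := card_le_card hinter
  rw [card_singleton] at hinter_card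
  rw [image_div_Icc_eq_union hM hX, filter_union]
  lia

end NatDiv

/- For `M = ⌊√x⌋`, the numbers `n ≤ M` yield distinct values `⌊x / n⌋ ≥ M`, and the values attained
at larger `n` are exactly the integers from `1` to `M`. -/
lemma abs_card_filter_floorSet_sub_le {x : ℝ} {M : ℕ} (hM : (M : ℝ) ^ 2 ≤ x)
    (hx : x < (M + 1) ^ 2) (p : ℕ → Prop) [DecidablePred p] :
    |(#{m ∈ floorSet x | p m} : ℝ) -
      ((#{n ∈ Icc 1 M | p ⌊x / (n : ℕ)⌋₊} : ℕ) + (#{m ∈ Icc 1 M | p m} : ℕ))| ≤ 1 := by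
  have hx₀ : 0 ≤ x := (sq_nonneg _).trans hM
  have hMX : M ^ 2 ≤ ⌊x⌋₊ := Nat.le_floor (mod_cast hM)
  have hXM : ⌊x⌋₊ < (M + 1) ^ 2 := (Nat.floor_lt hx₀).2 (mod_cast hx)
  obtain ⟨hle, hge⟩ := card_filter_image_div_bounds hMX hXM p
  simp only [floorSet, Nat.floor_div_natCast]
  rw [abs_le, neg_le_sub_iff_le_add, sub_le_iff_le_add]
  exact ⟨mod_cast hge, mod_cast hle.trans (Nat.le_add_left _ 1)⟩

lemma ediv_sub_ediv_sub_one {q : ℤ} (hq : 0 < q) (w : ℤ) :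
    w / q - (w - 1) / q = if q ∣ w then 1 else 0 := by
  have hmod := Int.mul_ediv_add_emod w q
  have hlt := Int.emod_lt_of_pos w hq
  split_ifs with h
  · rw [Int.emod_eq_zero_of_dvd h] at hmod
    have : (w - 1) / q = w / q - 1 := (Int.ediv_eq_iff_of_pos hq).2 (by constructor <;> linarith)
    linarith
  · have hpos : 0 < w % q := (Int.emod_pos_of_not_dvd h).resolve_left hq.ne'
    have : (w - 1) / q = w / q := (Int.ediv_eq_iff_of_pos hq).2 (by constructor <;> linarith)
    linarith

lemma ite_floor_modEq_eq_sawtooth {t : ℝ} (ht : 0 ≤ t) {q : ℕ} (hq : 1 ≤ q) (a : ℕ) :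
    (if ⌊t⌋₊ ≡ a [MOD q] then (1 : ℝ) else 0) =
      1 / q - sawtooth ((t - a) / q) + sawtooth ((t - a - 1) / q) := by
  have hfloor (b : ℤ) : ⌊(t - b) / q⌋ = (⌊t⌋₊ - b) / q := by
    rw [Int.floor_div_natCast, Int.floor_sub_intCast, Int.natCast_floor_eq_floor ht]
  have hfloor_a := hfloor a
  have hfloor_succ := hfloor (a + 1)
  push_cast at hfloor_a hfloor_succ
  rw [← sub_sub, ← sub_sub] at hfloor_succ
  have hiff : ⌊t⌋₊ ≡ a [MOD q] ↔ (q : ℤ) ∣ ⌊t⌋₊ - a := by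
    rw [Nat.ModEq.comm, Nat.modEq_iff_dvd]
  have hite := ediv_sub_ediv_sub_one (q := q) (mod_cast hq) (⌊t⌋₊ - a)
  rw [← hfloor_a, ← hfloor_succ] at hite
  have hcast : (if ⌊t⌋₊ ≡ a [MOD q] then (1 : ℝ) else 0) =
      ⌊(t - a) / q⌋ - ⌊(t - a - 1) / q⌋ := by
    simp only [hiff]
    exact mod_cast hite.symm
  rw [hcast, sawtooth, sawtooth, Int.fract, Int.fract]
  ring

lemma abs_card_filter_modEq_sub_le (M a : ℕ) {q : ℕ} (hq : 1 ≤ q) :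
    |(#{m ∈ Icc 1 M | m ≡ a [MOD q]} : ℝ) - M / q| ≤ 1 := by
  suffices h : |(#{m ∈ Ioc 0 M | m ≡ a [MOD q]} : ℚ) - M / q| ≤ 1 by
    have : ((|(#{m ∈ Ioc 0 M | m ≡ a [MOD q]} : ℚ) - M / q| : ℚ) : ℝ) ≤ 1 := mod_cast h
    push_cast at this
    exact this
  have hcount := Nat.Ioc_filter_modEq_card 0 M hq a
  set u : ℚ := (M - a) / q
  set v : ℚ := ((0 : ℕ) - a) / q
  have huv : (M : ℚ) / q = u - v := by
    rw [← sub_div]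
    simp
  have hfloor : ⌊v⌋ ≤ ⌊u⌋ := Int.floor_mono (sub_nonneg.1 (huv ▸ by positivity))
  rw [max_eq_left (sub_nonneg.2 hfloor)] at hcount
  have hcount' : (#{m ∈ Ioc 0 M | m ≡ a [MOD q]} : ℚ) = ⌊u⌋ - ⌊v⌋ := mod_cast hcount
  rw [hcount', huv, abs_le]
  constructor <;>
    linarith [Int.floor_le u, Int.lt_floor_add_one u, Int.floor_le v, Int.lt_floor_add_one v]

lemma abs_card_filter_floor_modEq_sub_le {R : ℝ} (hR : 0 < R) {q : ℕ} (hq : 1 ≤ q) (a : ℕ) {M : ℕ}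
    (hM : 1 ≤ M) :
    |(#{n ∈ Icc 1 M | ⌊q * R ^ 3 / (n : ℕ)⌋₊ ≡ a [MOD q]} : ℝ) - M / q| ≤
      2 * (361 * R * (Nat.log 2 M + 1 : ℕ) + 16 * M ^ 2 / R ^ 3) := by
  have : (0 : ℝ) < q := mod_cast hq
  have hterm (n : ℕ) : (if ⌊q * R ^ 3 / (n : ℝ)⌋₊ ≡ a [MOD q] then (1 : ℝ) else 0) =
      1 / q - sawtooth (R ^ 3 / n + -(a / q)) + sawtooth (R ^ 3 / n + -((a + 1) / q)) := by
    have hphase (b : ℝ) : (q * R ^ 3 / n - b) / q = R ^ 3 / n + -(b / q) := by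
      field_simp
      ring
    rw [ite_floor_modEq_eq_sawtooth (by positivity) hq, sub_sub _ (a : ℝ), hphase, hphase]
  have hsum : (#{n ∈ Icc 1 M | ⌊q * R ^ 3 / (n : ℕ)⌋₊ ≡ a [MOD q]} : ℝ) - M / q =
      ∑ n ∈ Icc 1 M, sawtooth (R ^ 3 / n + -((a + 1) / q)) -
        ∑ n ∈ Icc 1 M, sawtooth (R ^ 3 / n + -(a / q)) := by
    rw [card_filter]
    push_cast
    simp only [hterm, sum_add_distrib, sum_sub_distrib, sum_const, Nat.card_Icc,
      Nat.add_sub_cancel, nsmul_eq_mul]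
    ring
  rw [hsum, two_mul]
  exact (abs_sub _ _).trans (add_le_add (abs_sum_Icc_sawtooth_div_natCast_le hR _ hM)
    (abs_sum_Icc_sawtooth_div_natCast_le hR _ hM))

lemma abs_card_filter_floorSet_modEq_sub_le {x : ℝ} (hx : 3 ≤ x) {q : ℕ} (hq : 1 ≤ q) (a : ℕ) :
    |(#{m ∈ floorSet x | m ≡ a [MOD q]} : ℝ) - 2 * √x / q| ≤
      1444 * (x / q) ^ (1 / 3 : ℝ) * Real.log x + 36 * q := by
  have hq₁ : (1 : ℝ) ≤ q := mod_cast hq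
  set R : ℝ := (x / q) ^ (1 / 3 : ℝ)
  have hR : 0 < R := by positivity
  have hxR : x = q * R ^ 3 := by
    rw [← Real.rpow_natCast, ← Real.rpow_mul (by positivity)]
    norm_num
    field_simp
  set M := ⌊√x⌋₊
  have hM : 1 ≤ M := Nat.le_floor (by rw [Nat.cast_one, Real.one_le_sqrt]; linarith)
  have hMle : (M : ℝ) ≤ √x := Nat.floor_le x.sqrt_nonneg
  have hltM : √x < M + 1 := Nat.lt_floor_add_one _
  have hMx : (M : ℝ) ^ 2 ≤ x := (Real.le_sqrt' (mod_cast hM)).1 hMle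
  have hxM : x < (M + 1) ^ 2 := (Real.sqrt_lt' (by positivity)).1 hltM
  have hlog := natLog_two_add_one_le_two_mul_log hx hM hMx
  have hlarge : |(#{n ∈ Icc 1 M | ⌊x / (n : ℕ)⌋₊ ≡ a [MOD q]} : ℝ) - M / q| ≤
      1444 * R * Real.log x + 32 * q := by
    have hMR : M ^ 2 / R ^ 3 ≤ q := by
      rw [div_le_iff₀ (by positivity), ← hxR]
      exact hMx
    have hlogR := mul_le_mul_of_nonneg_left hlog hR.le
    have hbound := abs_card_filter_floor_modEq_sub_le hR hq a hM
    rw [← hxR, mul_div_assoc] at hbound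
    linarith
  have hsmall := abs_card_filter_modEq_sub_le M a hq
  have hsplit := abs_card_filter_floorSet_sub_le hMx hxM (· ≡ a [MOD q])
  have hround : |2 * (M / q) - 2 * √x / q| ≤ 2 := by
    rw [← mul_div_assoc, ← sub_div, ← mul_sub, abs_div, abs_of_pos (by positivity : (0 : ℝ) < q),
      div_le_iff₀ (by positivity), abs_le]
    constructor <;> linarith
  rw [abs_le] at *
  constructor <;> linarith

theorem main_theorem_general :
    ∃ C : ℝ, 0 < C ∧ ∀ (x : ℝ) (q a : ℕ), 3 ≤ x → 1 ≤ q → (q : ℝ) ≤ x ^ (1 / 4 : ℝ) →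
      |(#{m ∈ floorSet x | m ≡ a [MOD q]} : ℝ) - 2 * √x / q| ≤
        C * (x / q) ^ (1 / 3 : ℝ) * Real.log x := by
  refine ⟨1480, by norm_num, fun x q a hx hq hqx ↦ ?_⟩
  have hx₀ : 0 < x := by linarith
  have hq₀ : (0 : ℝ) < q := mod_cast hq
  have hqR : (q : ℝ) ≤ (x / q) ^ (1 / 3 : ℝ) := by
    have hq4 : (q : ℝ) ^ 4 ≤ x := by
      calc (q : ℝ) ^ 4 ≤ (x ^ (1 / 4 : ℝ)) ^ 4 := by gcongr
        _ = x := by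
          rw [← Real.rpow_natCast, ← Real.rpow_mul hx₀.le]
          norm_num
    rw [one_div, Real.le_rpow_inv_iff_of_pos hq₀.le (by positivity) three_pos, le_div_iff₀ hq₀,
      Real.rpow_ofNat, ← pow_succ]
    exact hq4
  have hqlog : q ≤ (x / q) ^ (1 / 3 : ℝ) * Real.log x :=
    hqR.trans (le_mul_of_one_le_right (by positivity) (one_le_log_of_three_le hx))
  linarith [abs_card_filter_floorSet_modEq_sub_le hx hq a]

theorem main_theorem :
    ∃ C : ℝ, 0 < C ∧ ∀ (x : ℝ) (q a : ℕ), 3 ≤ x → 1 ≤ q →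
      (q : ℝ) ≤ x ^ ((1 : ℝ) / 4) / (Real.log x) ^ ((3 : ℝ) / 2) →
      1 ≤ a → a ≤ q →
      |((((Finset.Icc 1 ⌊x⌋₊).image (fun n : ℕ => ⌊x / (n : ℝ)⌋₊)).filter
            (fun m : ℕ => m % q = a % q)).card : ℝ)
        - 2 * Real.sqrt x / q| ≤ C * (x / q) ^ ((1 : ℝ) / 3) * Real.log x := by
  obtain ⟨C, hC, h⟩ := main_theorem_general
  refine ⟨C, hC, fun x q a hx hq hqx _ _ ↦ h x q a hx hq (hqx.trans (div_le_self ?_ ?_))⟩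
  · positivity
  · exact Real.one_le_rpow (one_le_log_of_three_le hx) (by norm_num)
end

section
/- For every fixed positive integer q, S(x;q) := |{⌊x/n⌋ : 1 ≤ n ≤ x, q divides ⌊x/n⌋}| satisfies S(x;q) ∼ 2√x/q as x → ∞. -/
/-!
Writing `/` for floor division, `N / (N / m) = m` whenever `m ≤ √N`. Hence the values of
`n ↦ N / n` are all the integers up to `√N` together with the pairwise distinct values at `n ≤ √N`,
the two families sharing at most one element. The first family has about `√N / q` multiples of
`q`. For the second, `q ∣ N / n` says that the real number `N / (q n)` lies in the arc `[0, 1 / q)`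
modulo one, so one needs `N / (q n)`, `n ≤ √N`, to be equidistributed modulo one. The same argument
works in any residue class modulo `q`.

By Weyl's criterion this is a cancellation statement for the exponential means of `X / n` over
`n ≤ M`, where `X / M ^ 2 → κ ≠ 0`. Averaging over `H` consecutive shifts changes such a mean by
`O(H / M)`. Near `n = t M` the phases `X / (n + j) - X / n` converge to `-j κ / t ^ 2`: locally the
sequence is a rotation, which is nontrivial for almost every `t`, so the average over the shifts is
small once `H` is large.
-/

section

open Filter Finset MeasureTheory Topology
open scoped BigOperators

section VanDerCorput

variable {E : Type*} [NormedAddCommGroup E] {a : ℕ → E} {C : ℝ}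

theorem norm_sum_Icc_sub_sum_Icc_add_le (ha : ∀ n, ‖a n‖ ≤ C) (M j : ℕ) :
    ‖∑ n ∈ Icc 1 M, a n - ∑ n ∈ Icc 1 M, a (n + j)‖ ≤ 2 * C * j := by
  induction j with
  | zero => simp
  | succ j ih =>
    have telescope : ∑ n ∈ Icc 1 M, a (n + j) - ∑ n ∈ Icc 1 M, a (n + (j + 1)) =
        a (1 + j) - a (M + 1 + j) := by
      rw [← sum_sub_distrib, ← Ico_add_one_right_eq_Icc,
        ← neg_sub (a (M + 1 + j)), ← sum_Ico_sub (fun n => a (n + j)) (by lia), ← sum_neg_distrib]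
      simp only [neg_sub, add_right_comm, add_assoc]
    calc ‖∑ n ∈ Icc 1 M, a n - ∑ n ∈ Icc 1 M, a (n + (j + 1))‖
        = ‖(∑ n ∈ Icc 1 M, a n - ∑ n ∈ Icc 1 M, a (n + j)) + (a (1 + j) - a (M + 1 + j))‖ := by
          rw [← telescope, sub_add_sub_cancel]
      _ ≤ 2 * C * j + (C + C) :=
          norm_add_le_of_le ih (norm_sub_le_of_le (ha _) (ha _))
      _ = 2 * C * (j + 1 : ℕ) := by push_cast; ring

variable [NormedSpace ℝ E] [Module ℚ≥0 E]

theorem norm_expect_le_expect_norm {ι : Type*} (s : Finset ι) (f : ι → E) :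
    ‖𝔼 i ∈ s, f i‖ ≤ 𝔼 i ∈ s, ‖f i‖ :=
  le_expect_of_subadditive norm_zero norm_add_le fun r x => by
    simp [← NNRat.cast_smul_eq_nnqsmul ℝ, norm_smul]

theorem norm_expect_Icc_sub_expect_Icc_add_le (ha : ∀ n, ‖a n‖ ≤ C) (M j : ℕ) :
    ‖𝔼 n ∈ Icc 1 M, a n - 𝔼 n ∈ Icc 1 M, a (n + j)‖ ≤ 2 * C * j / M := by
  rcases M.eq_zero_or_pos with rfl | hM
  · simp
  · rw [le_div_iff₀' (by positivity), ← nsmul_eq_mul, ← RCLike.norm_nsmul ℝ, smul_sub]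
    simpa [← card_smul_expect] using norm_sum_Icc_sub_sum_Icc_add_le ha M j

theorem norm_expect_Icc_le_expect_norm_expect_add (ha : ∀ n, ‖a n‖ ≤ C) (M : ℕ) {H : ℕ}
    (hH : 0 < H) :
    ‖𝔼 n ∈ Icc 1 M, a n‖ ≤
      𝔼 n ∈ Icc 1 M, ‖𝔼 j ∈ range H, a (n + j)‖ + 2 * C * H / M := by
  have hC : 0 ≤ C := (norm_nonneg _).trans (ha 0)
  have hrange : (range H).Nonempty := nonempty_range_iff.2 hH.ne'
  have shift_le : ∀ j ∈ range H,
      ‖𝔼 n ∈ Icc 1 M, a n - 𝔼 n ∈ Icc 1 M, a (n + j)‖ ≤ 2 * C * H / M := fun j hj =>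
    (norm_expect_Icc_sub_expect_Icc_add_le ha M j).trans <| by
      gcongr
      exact (mem_range.1 hj).le
  calc ‖𝔼 n ∈ Icc 1 M, a n‖
      = ‖𝔼 n ∈ Icc 1 M, 𝔼 j ∈ range H, a (n + j) +
          𝔼 j ∈ range H, (𝔼 n ∈ Icc 1 M, a n - 𝔼 n ∈ Icc 1 M, a (n + j))‖ := by
        rw [expect_sub_distrib, expect_const hrange, expect_comm, add_sub_cancel]
    _ ≤ 𝔼 n ∈ Icc 1 M, ‖𝔼 j ∈ range H, a (n + j)‖ +
          𝔼 j ∈ range H, ‖𝔼 n ∈ Icc 1 M, a n - 𝔼 n ∈ Icc 1 M, a (n + j)‖ :=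
        norm_add_le_of_le (norm_expect_le_expect_norm _ _) (norm_expect_le_expect_norm _ _)
    _ ≤ 𝔼 n ∈ Icc 1 M, ‖𝔼 j ∈ range H, a (n + j)‖ + 2 * C * H / M := by
        gcongr
        exact expect_le hrange shift_le

end VanDerCorput

theorem integral_comp_ceil_mul {E : Type*} [NormedAddCommGroup E] [NormedSpace ℝ E]
    [CompleteSpace E] [Module ℚ≥0 E] (g : ℕ → E) {M : ℕ} (hM : 0 < M) :
    ∫ t in Set.Ioc (0 : ℝ) 1, g ⌈t * M⌉₊ = 𝔼 n ∈ Icc 1 M, g n := by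
  have hEq (n : ℕ) : Set.EqOn (fun _ => g (n + 1)) (fun u : ℝ => g ⌈u⌉₊)
      (Set.uIoo (n : ℝ) (n + 1 : ℕ)) := by
    rw [Set.uIoo_of_le (by simp)]
    intro u hu
    have : ⌈u⌉₊ = n + 1 := (Nat.ceil_eq_iff n.succ_ne_zero).2 ⟨by simpa using hu.1, hu.2.le⟩
    simp only [this]
  calc ∫ t in Set.Ioc (0 : ℝ) 1, g ⌈t * M⌉₊
      = (M : ℝ)⁻¹ • ∫ u in ((0 : ℕ) : ℝ)..M, g ⌈u⌉₊ := by
        rw [← intervalIntegral.integral_of_le zero_le_one,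
          intervalIntegral.integral_comp_mul_right (fun u => g ⌈u⌉₊) (by positivity), zero_mul,
          one_mul, Nat.cast_zero]
    _ = (M : ℝ)⁻¹ • ∑ n ∈ range M, ∫ u in (n : ℝ)..(n + 1 : ℕ), g ⌈u⌉₊ := by
        rw [intervalIntegral.sum_integral_adjacent_intervals (a := fun n : ℕ => (n : ℝ))
          fun n _ => intervalIntegrable_const.congr_uIoo (hEq n)]
    _ = (M : ℝ)⁻¹ • ∑ n ∈ range M, g (n + 1) := by
        congr! 2 with n
        rw [← intervalIntegral.integral_congr_uIoo (hEq n), intervalIntegral.integral_const,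
          Nat.cast_succ, add_sub_cancel_left, one_smul]
    _ = 𝔼 n ∈ Icc 1 M, g n := by
        rw [range_eq_Ico, sum_Ico_add' g, Ico_add_one_right_eq_Icc, zero_add, expect,
          Nat.card_Icc, add_tsub_cancel_right, ← NNRat.cast_smul_eq_nnqsmul ℝ]
        simp

section LocalRotation

theorem norm_expect_circle_le_one {κ : Type*} (s : Finset κ) (z : κ → Circle) :
    ‖𝔼 i ∈ s, (z i : ℂ)‖ ≤ 1 := by
  rcases s.eq_empty_or_nonempty with rfl | hs
  · simp
  · exact (norm_expect_le_expect_norm _ _).trans (expect_le hs fun i _ => (z i).norm_coe.le)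

theorem tendsto_expect_range_pow {z : ℂ} (hz : ‖z‖ ≤ 1) (hz1 : z ≠ 1) :
    Tendsto (fun H : ℕ => 𝔼 j ∈ range H, z ^ j) atTop (𝓝 0) := by
  refine squeeze_zero_norm (a := fun H : ℕ => 2 / ‖z - 1‖ / H) (fun H => ?_)
    (tendsto_const_div_atTop_nhds_zero_nat _)
  rw [expect_eq_sum_div_card, geom_sum_eq hz1, norm_div, norm_div, card_range,
    Complex.norm_natCast]
  gcongr
  calc ‖z ^ H - 1‖ ≤ ‖z‖ ^ H + 1 := by simpa using norm_sub_le (z ^ H) 1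
    _ ≤ 2 := by linarith [pow_le_one₀ (norm_nonneg z) hz (n := H)]

theorem tendsto_integral_norm_expect_range_pow {α : Type*} [MeasurableSpace α] {μ : Measure α}
    [IsFiniteMeasure μ] {u : α → Circle} (hu : AEStronglyMeasurable u μ) (hu1 : ∀ᵐ t ∂μ, u t ≠ 1) :
    Tendsto (fun H : ℕ => ∫ t, ‖𝔼 j ∈ range H, (u t : ℂ) ^ j‖ ∂μ) atTop (𝓝 0) := by
  have h := tendsto_integral_of_dominated_convergence (μ := μ)
    (F := fun (H : ℕ) t => ‖𝔼 j ∈ range H, (u t : ℂ) ^ j‖) (f := fun _ => 0) (fun _ => 1)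
    (fun H => ?_) (integrable_const 1) (fun H => .of_forall fun t => ?_) ?_
  · simpa only [integral_zero] using h
  · simp only [expect_eq_sum_div_card]
    have := continuous_subtype_val.comp_aestronglyMeasurable hu
    fun_prop
  · simpa using norm_expect_circle_le_one (range H) fun j => u t ^ j
  · filter_upwards [hu1] with t ht
    exact tendsto_zero_iff_norm_tendsto_zero.1
      (tendsto_expect_range_pow (u t).norm_coe.le (mt Circle.coe_eq_one.1 ht))

variable {ι : Type*} {l : Filter ι} [l.IsCountablyGenerated] {M : ι → ℕ} {a : ι → ℕ → Circle}
  {u : ℝ → Circle}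

theorem tendsto_expect_norm_expect_range_add (hM : Tendsto M l atTop)
    (hau : ∀ t ∈ Set.Ioc (0 : ℝ) 1, ∀ j : ℕ,
      Tendsto (fun i => a i (⌈t * M i⌉₊ + j) / a i ⌈t * M i⌉₊) l (𝓝 (u t ^ j))) (H : ℕ) :
    Tendsto (fun i => 𝔼 n ∈ Icc 1 (M i), ‖𝔼 j ∈ range H, (a i (n + j) : ℂ)‖) l
      (𝓝 (∫ t in Set.Ioc (0 : ℝ) 1, ‖𝔼 j ∈ range H, (u t : ℂ) ^ j‖)) := by
  have norm_eq (i : ι) (n : ℕ) : ‖𝔼 j ∈ range H, (a i (n + j) : ℂ)‖ =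
      ‖𝔼 j ∈ range H, ((a i (n + j) / a i n : Circle) : ℂ)‖ := by
    simp_rw [Circle.coe_div, ← expect_div, norm_div, Circle.norm_coe, div_one]
  have h := tendsto_integral_filter_of_dominated_convergence
    (μ := volume.restrict (Set.Ioc (0 : ℝ) 1)) (l := l)
    (F := fun i t => ‖𝔼 j ∈ range H, (a i (⌈t * M i⌉₊ + j) : ℂ)‖)
    (f := fun t => ‖𝔼 j ∈ range H, (u t : ℂ) ^ j‖) (fun _ => 1)
    (.of_forall fun i => ?_) (.of_forall fun i => .of_forall fun t => ?_) (integrable_const 1) ?_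
  · refine h.congr' ?_
    filter_upwards [hM.eventually_gt_atTop 0] with i hi
    exact integral_comp_ceil_mul (fun n => ‖𝔼 j ∈ range H, (a i (n + j) : ℂ)‖) hi
  · exact ((measurable_from_nat (f := fun n => ‖𝔼 j ∈ range H, (a i (n + j) : ℂ)‖)).comp
      (Nat.measurable_ceil.comp (measurable_id.mul_const _))).aestronglyMeasurable
  · simpa using norm_expect_circle_le_one (range H) fun j => a i (⌈t * M i⌉₊ + j)
  · filter_upwards [ae_restrict_mem measurableSet_Ioc] with t ht
    simp_rw [norm_eq, expect_eq_sum_div_card, ← Circle.coe_pow]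
    exact ((tendsto_finsetSum _ fun j _ =>
      (continuous_subtype_val.tendsto _).comp (hau t ht j)).div_const _).norm

theorem tendsto_expect_Icc_of_tendsto_div (hM : Tendsto M l atTop)
    (hu : AEStronglyMeasurable u (volume.restrict (Set.Ioc (0 : ℝ) 1)))
    (hu1 : ∀ᵐ t ∂volume.restrict (Set.Ioc (0 : ℝ) 1), u t ≠ 1)
    (hau : ∀ t ∈ Set.Ioc (0 : ℝ) 1, ∀ j : ℕ,
      Tendsto (fun i => a i (⌈t * M i⌉₊ + j) / a i ⌈t * M i⌉₊) l (𝓝 (u t ^ j))) :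
    Tendsto (fun i => 𝔼 n ∈ Icc 1 (M i), (a i n : ℂ)) l (𝓝 0) := by
  rw [tendsto_zero_iff_norm_tendsto_zero]
  refine tendsto_order.2 ⟨fun b hb => .of_forall fun i => hb.trans_le (norm_nonneg _),
    fun ε hε => ?_⟩
  obtain ⟨H, hH0, hH⟩ := ((eventually_gt_atTop 0).and
    ((tendsto_integral_norm_expect_range_pow hu hu1).eventually_lt_const hε)).exists
  have bound_lim := (tendsto_expect_norm_expect_range_add hM hau H).add
    ((tendsto_natCast_atTop_atTop.comp hM).const_div_atTop (2 * 1 * H : ℝ))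
  rw [add_zero] at bound_lim
  filter_upwards [bound_lim.eventually_lt_const hH] with i hi
  exact (norm_expect_Icc_le_expect_norm_expect_add (fun n => (a i n).norm_coe.le) _ hH0).trans_lt hi

end LocalRotation

section DivSequence

variable {ι : Type*} {l : Filter ι} {M : ι → ℕ} {X : ι → ℝ} {κ : ℝ}

theorem tendsto_div_ceil_mul_add_sub (hM : Tendsto M l atTop)
    (hX : Tendsto (fun i => X i / (M i : ℝ) ^ 2) l (𝓝 κ)) {t : ℝ} (ht : 0 < t) (j : ℕ) :
    Tendsto (fun i => X i / (⌈t * M i⌉₊ + j : ℕ) - X i / ⌈t * M i⌉₊) l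
      (𝓝 (j * (-κ / t ^ 2))) := by
  have hMr : Tendsto (fun i => (M i : ℝ)) l atTop := tendsto_natCast_atTop_atTop.comp hM
  have ceil_lim : Tendsto (fun i => (⌈t * M i⌉₊ : ℝ) / M i) l (𝓝 t) :=
    (tendsto_nat_ceil_mul_div_atTop ht.le).comp hMr
  have ceil_add_lim : Tendsto (fun i => (⌈t * M i⌉₊ + j : ℝ) / M i) l (𝓝 t) := by
    simpa only [add_div, add_zero] using ceil_lim.add (hMr.const_div_atTop (j : ℝ))
  have h := (hX.div (ceil_add_lim.mul ceil_lim) (by positivity)).const_mul (-j : ℝ)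
  rw [show (-j : ℝ) * (κ / (t * t)) = j * (-κ / t ^ 2) by ring] at h
  refine h.congr' ?_
  filter_upwards [hM.eventually_gt_atTop 0] with i hi
  have : 0 < ⌈t * M i⌉₊ := Nat.ceil_pos.2 (by positivity)
  simp only [Pi.div_apply]
  push_cast
  field_simp
  ring

theorem ae_toCircle_neg_div_sq_ne_one (hκ : κ ≠ 0) :
    ∀ᵐ t ∂volume.restrict (Set.Ioc (0 : ℝ) 1),
      AddCircle.toCircle ((-κ / t ^ 2 : ℝ) : UnitAddCircle) ≠ 1 := by
  have hcount : (Set.range fun k : ℤ => √(-κ / k)).Countable := Set.countable_range _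
  filter_upwards [ae_restrict_mem measurableSet_Ioc, hcount.ae_notMem _] with t ht hrange h
  rw [← AddCircle.toCircle_zero, (AddCircle.injective_toCircle one_ne_zero).eq_iff,
    AddCircle.coe_eq_zero_iff] at h
  obtain ⟨k, hk⟩ := h
  rw [zsmul_eq_mul, mul_one] at hk
  refine hrange ⟨k, ?_⟩
  simp only [hk]
  rw [div_div_cancel₀ (neg_ne_zero.2 hκ), Real.sqrt_sq ht.1.le]

theorem tendsto_expect_Icc_toCircle_div [l.IsCountablyGenerated] (hM : Tendsto M l atTop)
    (hX : Tendsto (fun i => X i / (M i : ℝ) ^ 2) l (𝓝 κ)) (hκ : κ ≠ 0) :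
    Tendsto (fun i => 𝔼 n ∈ Icc 1 (M i),
      (AddCircle.toCircle ((X i / n : ℝ) : UnitAddCircle) : ℂ)) l (𝓝 0) := by
  have toCircle_continuous : Continuous fun y : ℝ => AddCircle.toCircle (y : UnitAddCircle) :=
    AddCircle.continuous_toCircle.comp (AddCircle.continuous_mk' 1)
  refine tendsto_expect_Icc_of_tendsto_div hM ?_ (ae_toCircle_neg_div_sq_ne_one hκ)
    fun t ht j => ?_
  · exact toCircle_continuous.comp_aestronglyMeasurable
      (Measurable.aestronglyMeasurable (by fun_prop))
  · have h := (toCircle_continuous.tendsto _).comp (tendsto_div_ceil_mul_add_sub hM hX ht.1 j)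
    rw [← nsmul_eq_mul, AddCircle.coe_nsmul, AddCircle.toCircle_nsmul] at h
    refine h.congr fun i => ?_
    rw [Function.comp_apply, AddCircle.coe_sub, sub_eq_add_neg, AddCircle.toCircle_add,
      AddCircle.toCircle_neg, ← div_eq_mul_inv]

end DivSequence

section EmpiricalMeasure

variable {α β : Type*} [MeasurableSpace α]

/-- The empirical measure of the family `y` over the nonempty finite index set `s`: each `y i`
with `i ∈ s` carries mass `1 / #s`, counted with multiplicity. -/
noncomputable def empiricalMeasure (s : Finset β) (hs : s.Nonempty) (y : β → α) :
    ProbabilityMeasure α :=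
  ⟨(#s : ENNReal)⁻¹ • ∑ i ∈ s, Measure.dirac (y i), ⟨by
    have hcard : (#s : ENNReal) ≠ 0 := by exact_mod_cast hs.card_ne_zero
    simp [ENNReal.inv_mul_cancel hcard (ENNReal.natCast_ne_top _)]⟩⟩

variable [MeasurableSingletonClass α] {s : Finset β} (hs : s.Nonempty) (y : β → α)

theorem integral_empiricalMeasure {E : Type*} [NormedAddCommGroup E] [NormedSpace ℝ E]
    [CompleteSpace E] [Module ℚ≥0 E] (f : α → E) :
    ∫ z, f z ∂(empiricalMeasure s hs y : Measure α) = 𝔼 i ∈ s, f (y i) := by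
  rw [empiricalMeasure, ProbabilityMeasure.coe_mk, integral_smul_measure,
    integral_finsetSum_measure fun i _ => integrable_dirac (by simp)]
  simp [expect, ← NNRat.cast_smul_eq_nnqsmul ℝ]

theorem measureReal_empiricalMeasure (E : Set α) [DecidablePred (· ∈ E)] :
    (empiricalMeasure s hs y : Measure α).real E = #{i ∈ s | y i ∈ E} / #s := by
  simp [empiricalMeasure, Measure.real, Set.indicator_apply, Finset.sum_boole, div_eq_inv_mul]

end EmpiricalMeasure

section Weyl

variable {T : ℝ} [Fact (0 < T)] {ι : Type*} {l : Filter ι}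

theorem tendsto_probabilityMeasure_of_tendsto_integral_fourier
    {μ : ι → ProbabilityMeasure (AddCircle T)} {μ₀ : ProbabilityMeasure (AddCircle T)}
    (h : ∀ k : ℤ, Tendsto (fun i => ∫ z, fourier k z ∂(μ i : Measure (AddCircle T))) l
      (𝓝 (∫ z, fourier k z ∂(μ₀ : Measure (AddCircle T))))) :
    Tendsto μ l (𝓝 μ₀) := by
  have integrable (ν : ProbabilityMeasure (AddCircle T)) (g : C(AddCircle T, ℂ)) :
      Integrable g (ν : Measure (AddCircle T)) :=
    g.continuous.integrable_of_hasCompactSupport (HasCompactSupport.of_compactSpace _)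
  refine ProbabilityMeasure.tendsto_of_tight_of_separatesPoints ℂ
    IsTightMeasureSet.of_compactSpace
    (A := fourierSubalgebra.comap (BoundedContinuousFunction.toContinuousMapStarₐ ℂ)) ?_ ?_
  · intro x y hxy
    obtain ⟨_, ⟨f, hf, rfl⟩, hfxy⟩ := fourierSubalgebra_separatesPoints hxy
    exact ⟨f, ⟨f, ⟨BoundedContinuousFunction.mkOfCompact f, hf, rfl⟩, rfl⟩, hfxy⟩
  · intro g hg
    have hspan : g.toContinuousMap ∈ Submodule.span ℂ (Set.range (fourier (T := T))) := by
      rw [← fourierSubalgebra_coe]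
      exact hg
    change Tendsto (fun i => ∫ z, g.toContinuousMap z ∂(μ i : Measure (AddCircle T))) l
      (𝓝 (∫ z, g.toContinuousMap z ∂(μ₀ : Measure (AddCircle T))))
    generalize g.toContinuousMap = f at hspan
    induction hspan using Submodule.span_induction with
    | mem f hf =>
      obtain ⟨k, rfl⟩ := hf
      exact h k
    | zero => simpa using tendsto_const_nhds
    | add f₁ f₂ _ _ h₁ h₂ =>
      simp only [ContinuousMap.add_apply, integral_add (integrable _ f₁) (integrable _ f₂)]
      exact h₁.add h₂
    | smul c f _ hf =>
      simp only [ContinuousMap.smul_apply, integral_smul]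
      exact hf.const_smul c

theorem integral_fourier_haarAddCircle (k : ℤ) :
    ∫ z, fourier k z ∂AddCircle.haarAddCircle (T := T) = if k = 0 then 1 else 0 := by
  simpa [fourierCoeff, Pi.single_apply, eq_comm] using congrFun (fourierCoeff_fourier (T := T) k) 0

variable {β : Type*} {s : ι → Finset β} {y : ι → β → AddCircle T}

theorem tendsto_empiricalMeasure_haarAddCircle (hs : ∀ i, (s i).Nonempty)
    (h : ∀ k : ℤ, k ≠ 0 → Tendsto (fun i => 𝔼 n ∈ s i, fourier k (y i n)) l (𝓝 0)) :
    Tendsto (fun i => empiricalMeasure (s i) (hs i) (y i)) l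
      (𝓝 ⟨AddCircle.haarAddCircle, inferInstance⟩) := by
  refine tendsto_probabilityMeasure_of_tendsto_integral_fourier fun k => ?_
  simp only [integral_empiricalMeasure, ProbabilityMeasure.coe_mk, integral_fourier_haarAddCircle]
  split_ifs with hk
  · simpa [hk, hs] using tendsto_const_nhds
  · exact h k hk

theorem tendsto_card_filter_mem_div_card (hs : ∀ i, (s i).Nonempty)
    (h : ∀ k : ℤ, k ≠ 0 → Tendsto (fun i => 𝔼 n ∈ s i, fourier k (y i n)) l (𝓝 0))
    {E : Set (AddCircle T)} [DecidablePred (· ∈ E)]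
    (hE : AddCircle.haarAddCircle (frontier E) = 0) :
    Tendsto (fun i => (#{n ∈ s i | y i n ∈ E} : ℝ) / #(s i)) l
      (𝓝 (AddCircle.haarAddCircle.real E)) := by
  simp_rw [← measureReal_empiricalMeasure (hs _)]
  exact (ENNReal.tendsto_toReal (measure_ne_top _ _)).comp <|
    ProbabilityMeasure.tendsto_measure_of_null_frontier_of_tendsto'
      (tendsto_empiricalMeasure_haarAddCircle hs h) hE

end Weyl

section Arc

variable {T : ℝ} (a b : ℝ)

theorem ball_subset_coe_image_Ico :
    Metric.ball (((a + b) / 2 : ℝ) : AddCircle T) ((b - a) / 2) ⊆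
      ((↑) : ℝ → AddCircle T) '' Set.Ico a b := by
  intro z hz
  induction z using QuotientAddGroup.induction_on with | H r
  rw [mem_ball_iff_norm, ← AddCircle.coe_sub, QuotientAddGroup.norm_lt_iff] at hz
  obtain ⟨s, hs, hsr⟩ := hz
  rw [Real.norm_eq_abs, abs_lt] at hsr
  refine ⟨s + (a + b) / 2, ⟨by linarith, by linarith⟩, ?_⟩
  rw [AddCircle.coe_add, hs, ← AddCircle.coe_add]
  congr 1
  ring

theorem coe_image_Ico_subset_closedBall :
    ((↑) : ℝ → AddCircle T) '' Set.Ico a b ⊆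
      Metric.closedBall (((a + b) / 2 : ℝ) : AddCircle T) ((b - a) / 2) := by
  rintro _ ⟨r, hr, rfl⟩
  rw [mem_closedBall_iff_norm, ← AddCircle.coe_sub]
  refine QuotientAddGroup.norm_mk_le_norm.trans ?_
  rw [Real.norm_eq_abs, abs_le]
  exact ⟨by linarith [hr.1], by linarith [hr.2]⟩

variable [Fact (0 < T)]

theorem volume_frontier_coe_image_Ico :
    volume (frontier (((↑) : ℝ → AddCircle T) '' Set.Ico a b)) = 0 := by
  refine measure_mono_null (Set.sdiff_subset_sdiff
    (closure_minimal (coe_image_Ico_subset_closedBall a b) Metric.isClosed_closedBall)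
    (interior_maximal (ball_subset_coe_image_Ico a b) Metric.isOpen_ball)) ?_
  exact ae_le_set.1 AddCircle.closedBall_ae_eq_ball.le

variable {a b} in
theorem volume_coe_image_Ico (h : b ≤ a + T) :
    volume (((↑) : ℝ → AddCircle T) '' Set.Ico a b) = ENNReal.ofReal (b - a) := by
  have hball := AddCircle.volume_closedBall T (x := (((a + b) / 2 : ℝ) : AddCircle T)) ((b - a) / 2)
  rw [mul_div_cancel₀ _ two_ne_zero, min_eq_right (by linarith)] at hball
  exact le_antisymm
    ((measure_mono (coe_image_Ico_subset_closedBall a b)).trans_eq hball)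
    (hball.symm.trans_le <| (measure_congr AddCircle.closedBall_ae_eq_ball).trans_le <|
      measure_mono (ball_subset_coe_image_Ico a b))

end Arc

section Residues

theorem coe_mem_coe_image_iff {T r : ℝ} {S : Set ℝ} :
    (r : AddCircle T) ∈ ((↑) : ℝ → AddCircle T) '' S ↔ ∃ k : ℤ, r - k • T ∈ S := by
  constructor
  · rintro ⟨t, ht, htr⟩
    rw [← sub_eq_zero, ← AddCircle.coe_sub, AddCircle.coe_eq_zero_iff] at htr
    obtain ⟨k, hk⟩ := htr
    exact ⟨-k, by rwa [neg_smul, hk, sub_neg_eq_add, add_sub_cancel]⟩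
  · rintro ⟨k, hk⟩
    exact ⟨_, hk, by
      rw [AddCircle.coe_sub, AddCircle.coe_zsmul, AddCircle.coe_period, smul_zero, sub_zero]⟩

theorem floor_modEq_iff_coe_div_mem {q : ℕ} (hq : 0 < q) (a : ℤ) (y : ℝ) :
    ⌊y⌋ ≡ a [ZMOD q] ↔ ((y / q : ℝ) : UnitAddCircle) ∈
      ((↑) : ℝ → UnitAddCircle) '' Set.Ico (a / q : ℝ) ((a + 1) / q) := by
  have hq' : (0 : ℝ) < q := by exact_mod_cast hq
  rw [coe_mem_coe_image_iff, Int.modEq_comm, Int.modEq_iff_add_fac]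
  refine exists_congr fun k => ?_
  have hsub : y / q - k • (1 : ℝ) = (y - q * k) / q := by
    rw [zsmul_eq_mul, mul_one]
    field_simp
  rw [Int.floor_eq_iff, hsub, Set.mem_Ico, div_le_div_iff_of_pos_right hq',
    div_lt_div_iff_of_pos_right hq', le_sub_iff_add_le, sub_lt_iff_lt_add]
  push_cast
  rw [add_right_comm]

variable {q : ℕ} {ι : Type*} {l : Filter ι} [l.IsCountablyGenerated] {M : ι → ℕ}

theorem tendsto_card_filter_div_mem_coe_image_Ico {X : ι → ℝ} {κ a b : ℝ} (hM_pos : ∀ i, 0 < M i)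
    (hM : Tendsto M l atTop) (hX : Tendsto (fun i => X i / (M i : ℝ) ^ 2) l (𝓝 κ)) (hκ : κ ≠ 0)
    (hab : a ≤ b) (hba : b ≤ a + 1)
    [DecidablePred (· ∈ ((↑) : ℝ → UnitAddCircle) '' Set.Ico a b)] :
    Tendsto (fun i => (#{n ∈ Icc 1 (M i) | ((X i / (n : ℕ) : ℝ) : UnitAddCircle) ∈
      ((↑) : ℝ → UnitAddCircle) '' Set.Ico a b} : ℝ) / M i) l (𝓝 (b - a)) := by
  have volume_eq_haar : (volume : Measure UnitAddCircle) = AddCircle.haarAddCircle := by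
    rw [AddCircle.volume_eq_smul_haarAddCircle, ENNReal.ofReal_one, one_smul]
  have exponential_means (k : ℤ) (hk : k ≠ 0) : Tendsto (fun i => 𝔼 n ∈ Icc 1 (M i),
      fourier k ((X i / n : ℝ) : UnitAddCircle)) l (𝓝 0) := by
    have hkX : Tendsto (fun i => k * X i / (M i : ℝ) ^ 2) l (𝓝 (k * κ)) := by
      simpa only [mul_div_assoc] using hX.const_mul (k : ℝ)
    refine (tendsto_expect_Icc_toCircle_div hM hkX (by positivity)).congr fun i => ?_
    simp only [fourier_apply, ← AddCircle.coe_zsmul, zsmul_eq_mul, mul_div_assoc]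
  have h := tendsto_card_filter_mem_div_card (fun i => nonempty_Icc.2 (hM_pos i)) exponential_means
    (volume_eq_haar ▸ volume_frontier_coe_image_Ico a b)
  rw [← volume_eq_haar, measureReal_def, volume_coe_image_Ico hba,
    ENNReal.toReal_ofReal (sub_nonneg.2 hab)] at h
  simpa only [Nat.card_Icc, add_tsub_cancel_right] using h

theorem tendsto_card_filter_div_modEq {N : ι → ℕ} {κ : ℝ} (hM_pos : ∀ i, 0 < M i)
    (hM : Tendsto M l atTop) (hN : Tendsto (fun i => (N i : ℝ) / (M i : ℝ) ^ 2) l (𝓝 κ))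
    (hκ : κ ≠ 0) (hq : 0 < q) (a : ℕ) :
    Tendsto (fun i => (#{n ∈ Icc 1 (M i) | N i / n ≡ a [MOD q]} : ℝ) / M i) l (𝓝 (1 / q)) := by
  classical
  have hq' : (0 : ℝ) < q := by exact_mod_cast hq
  have hNq : Tendsto (fun i => (N i / q : ℝ) / (M i : ℝ) ^ 2) l (𝓝 (κ / q)) := by
    simpa only [div_right_comm] using hN.div_const (q : ℝ)
  have h := tendsto_card_filter_div_mem_coe_image_Ico hM_pos hM hNq (by positivity)
    (a := a / q) (b := (a + 1) / q) (by gcongr; simp)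
    (by rw [add_div]; gcongr; exact div_le_one_of_le₀ (by exact_mod_cast hq) hq'.le)
  rw [← sub_div, add_sub_cancel_left] at h
  refine h.congr fun i => ?_
  congr! with n
  rw [← Nat.floor_div_eq_div (K := ℝ), ← Int.natCast_modEq_iff,
    Int.natCast_floor_eq_floor (by positivity), floor_modEq_iff_coe_div_mem hq, div_right_comm]
  rfl

end Residues

section Hyperbola

variable {N : ℕ}

theorem div_div_self_of_mul_self_le {m : ℕ} (hm : 0 < m) (h : m * m ≤ N) : N / (N / m) = m := by
  have hle : m ≤ N / m := (Nat.le_div_iff_mul_le hm).2 h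
  refine Nat.div_eq_of_lt_le ?_ ?_
  · exact Nat.mul_div_le N m
  · have := Nat.lt_mul_div_succ N hm
    nlinarith

theorem leftInvOn_div_Icc_sqrt :
    Set.LeftInvOn (N / ·) (N / ·) (Icc 1 N.sqrt : Finset ℕ) := fun m hm => by
  obtain ⟨hm1, hms⟩ := mem_Icc.1 (mem_coe.1 hm)
  exact div_div_self_of_mul_self_le hm1 (Nat.le_sqrt.1 hms)

theorem image_div_Icc_eq_union_s10 :
    (Icc 1 N).image (N / ·) = (Icc 1 N.sqrt).image (N / ·) ∪ Icc 1 N.sqrt := by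
  ext m
  simp only [mem_union, mem_image, mem_Icc]
  constructor
  · rintro ⟨n, ⟨hn1, hnN⟩, rfl⟩
    rcases le_or_gt n N.sqrt with hn | hn
    · exact .inl ⟨n, ⟨hn1, hn⟩, rfl⟩
    · refine .inr ⟨Nat.div_pos hnN hn1, Nat.le_of_lt_succ (Nat.div_lt_of_lt_mul ?_)⟩
      exact (Nat.lt_succ_sqrt N).trans_le (Nat.mul_le_mul_right _ hn)
  · rintro (⟨n, ⟨hn1, hns⟩, rfl⟩ | ⟨hm1, hms⟩)
    · exact ⟨n, ⟨hn1, hns.trans N.sqrt_le_self⟩, rfl⟩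
    · exact ⟨N / m, ⟨Nat.div_pos (hms.trans N.sqrt_le_self) hm1, Nat.div_le_self _ _⟩,
        div_div_self_of_mul_self_le hm1 (Nat.le_sqrt.1 hms)⟩

theorem image_div_Icc_sqrt_inter_subset :
    (Icc 1 N.sqrt).image (N / ·) ∩ Icc 1 N.sqrt ⊆ {N.sqrt} := by
  intro m hm
  simp only [mem_inter, mem_image, mem_Icc, mem_singleton] at hm ⊢
  obtain ⟨⟨n, ⟨hn1, hns⟩, rfl⟩, -, hle⟩ := hm
  refine hle.antisymm ((Nat.le_div_iff_mul_le hn1).2 ?_)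
  exact (Nat.mul_le_mul_left _ hns).trans N.sqrt_le

theorem abs_card_filter_image_div_sub_le (p : ℕ → Prop) [DecidablePred p] :
    |(#{m ∈ (Icc 1 N).image (N / ·) | p m} : ℝ) -
      (#{d ∈ Icc 1 N.sqrt | p (N / d)} + #{m ∈ Icc 1 N.sqrt | p m})| ≤ 1 := by
  have card_large : #{m ∈ (Icc 1 N.sqrt).image (N / ·) | p m} =
      #{d ∈ Icc 1 N.sqrt | p (N / d)} := by
    rw [filter_image, card_image_of_injOn]
    exact leftInvOn_div_Icc_sqrt.injOn.mono (coe_subset.2 (filter_subset _ _))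
  have card_inter : #({m ∈ (Icc 1 N.sqrt).image (N / ·) | p m} ∩ {m ∈ Icc 1 N.sqrt | p m}) ≤ 1 :=
    card_le_one_iff_subset_singleton.2 ⟨N.sqrt,
      (inter_subset_inter (filter_subset _ _) (filter_subset _ _)).trans
        image_div_Icc_sqrt_inter_subset⟩
  have inclusion_exclusion := card_union_add_card_inter
    {m ∈ (Icc 1 N.sqrt).image (N / ·) | p m} {m ∈ Icc 1 N.sqrt | p m}
  rw [← filter_union, ← image_div_Icc_eq_union_s10, card_large] at inclusion_exclusion
  rw [← Nat.cast_add, ← inclusion_exclusion, Nat.cast_add, sub_add_cancel_left, abs_neg,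
    Nat.abs_cast]
  exact_mod_cast card_inter

end Hyperbola

section Counting

theorem abs_card_filter_modEq_sub_div_le {q : ℕ} (hq : 0 < q) (a s : ℕ) :
    |(#{m ∈ Icc 1 s | m ≡ a [MOD q]} : ℝ) - s / q| ≤ 1 := by
  have floor_mono : ⌊((0 : ℕ) - a : ℚ) / q⌋ ≤ ⌊(s - a : ℚ) / q⌋ := by
    gcongr
    exact s.zero_le
  have card_eq : (#{m ∈ Icc 1 s | m ≡ a [MOD q]} : ℤ) =
      ⌊(s - a : ℚ) / q⌋ - ⌊((0 : ℕ) - a : ℚ) / q⌋ := by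
    rw [← max_eq_left (sub_nonneg.2 floor_mono)]
    exact Nat.Ioc_filter_modEq_card 0 s hq a
  have card_near : |(#{m ∈ Icc 1 s | m ≡ a [MOD q]} : ℚ) - s / q| ≤ 1 := by
    have hdiv : (s : ℚ) / q = (s - a) / q - ((0 : ℕ) - a) / q := by simp [← sub_div]
    rw [← Int.cast_natCast, card_eq, Int.cast_sub, hdiv, abs_le]
    constructor <;> linarith [Int.floor_le ((s - a : ℚ) / q),
      Int.lt_floor_add_one ((s - a : ℚ) / q), Int.floor_le (((0 : ℕ) - a : ℚ) / q),
      Int.lt_floor_add_one (((0 : ℕ) - a : ℚ) / q)]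
  simpa using (Rat.cast_le (K := ℝ)).2 card_near

theorem tendsto_div_of_abs_sub_le {ι : Type*} {l : Filter ι} {f g h : ι → ℝ} {C L : ℝ}
    (hh : Tendsto h l atTop) (hfg : ∀ i, |f i - g i| ≤ C)
    (hg : Tendsto (fun i => g i / h i) l (𝓝 L)) : Tendsto (fun i => f i / h i) l (𝓝 L) := by
  have error_lim : Tendsto (fun i => (f i - g i) / h i) l (𝓝 0) := by
    refine squeeze_zero_norm' ?_ (hh.const_div_atTop C)
    filter_upwards [hh.eventually_gt_atTop 0] with i hi
    rw [norm_div, Real.norm_of_nonneg hi.le]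
    gcongr
    exact hfg i
  simpa [← add_div] using error_lim.add hg

theorem tendsto_natCast_div_sqrt_sq :
    Tendsto (fun N : ℕ => (N : ℝ) / (N.sqrt : ℝ) ^ 2) atTop (𝓝 1) := by
  have h := ((tendsto_nat_floor_div_atTop (R := ℝ)).comp
    (Real.tendsto_sqrt_atTop.comp (tendsto_natCast_atTop_atTop (R := ℝ)))).inv₀ one_ne_zero |>.pow 2
  rw [inv_one, one_pow] at h
  refine h.congr fun N => ?_
  simp only [Function.comp_apply]
  rw [Real.nat_floor_real_sqrt_eq_nat_sqrt, inv_div, div_pow, Real.sq_sqrt N.cast_nonneg]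

theorem tendsto_natSqrt_atTop : Tendsto Nat.sqrt atTop atTop :=
  tendsto_atTop_atTop.2 fun b => ⟨b * b, fun _ => Nat.le_sqrt.2⟩

variable {q : ℕ}

theorem tendsto_card_filter_div_modEq_div_sqrt (hq : 0 < q) (a : ℕ) :
    Tendsto (fun N : ℕ => (#{n ∈ Icc 1 N.sqrt | N / n ≡ a [MOD q]} : ℝ) / N.sqrt) atTop
      (𝓝 (1 / q)) := by
  rw [← tendsto_add_atTop_iff_nat 1]
  exact tendsto_card_filter_div_modEq (fun N => Nat.sqrt_pos.2 N.succ_pos)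
    (tendsto_natSqrt_atTop.comp (tendsto_add_atTop_nat 1))
    (tendsto_natCast_div_sqrt_sq.comp (tendsto_add_atTop_nat 1)) one_ne_zero hq a

theorem tendsto_card_filter_modEq_div (hq : 0 < q) (a : ℕ) :
    Tendsto (fun N : ℕ => (#{m ∈ Icc 1 N | m ≡ a [MOD q]} : ℝ) / N) atTop (𝓝 (1 / q)) := by
  refine tendsto_div_of_abs_sub_le tendsto_natCast_atTop_atTop
    (abs_card_filter_modEq_sub_div_le hq a) (tendsto_const_nhds.congr' ?_)
  filter_upwards [eventually_gt_atTop 0] with N hN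
  field_simp

theorem tendsto_card_filter_image_div_modEq (hq : 0 < q) (a : ℕ) :
    Tendsto (fun N : ℕ => (#{m ∈ (Icc 1 N).image (N / ·) | m ≡ a [MOD q]} : ℝ) / √N) atTop
      (𝓝 (2 / q)) := by
  have main_terms := (tendsto_card_filter_div_modEq_div_sqrt hq a).add
    ((tendsto_card_filter_modEq_div hq a).comp tendsto_natSqrt_atTop)
  simp only [Function.comp_apply, ← add_div, one_add_one_eq_two] at main_terms
  have h := (tendsto_div_of_abs_sub_le (tendsto_natCast_atTop_atTop.comp tendsto_natSqrt_atTop)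
    (fun N => abs_card_filter_image_div_sub_le (N := N) (· ≡ a [MOD q])) main_terms).mul
      (tendsto_natCast_div_sqrt_sq.sqrt.inv₀ (by simp))
  rw [Real.sqrt_one, inv_one, mul_one] at h
  refine h.congr' ?_
  filter_upwards [eventually_gt_atTop 0] with N hN
  have : 0 < N.sqrt := Nat.sqrt_pos.2 hN
  rw [Real.sqrt_div' _ (by positivity), Real.sqrt_sq (by positivity), inv_div, Function.comp_apply,
    div_mul_div_cancel₀ (by positivity)]

theorem heyman_conjecture_general (hq : 0 < q) (a : ℕ) :
    Tendsto (fun x : ℝ =>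
        (#{m ∈ (Icc 1 ⌊x⌋₊).image (fun n : ℕ => ⌊x / (n : ℝ)⌋₊) | m ≡ a [MOD q]} : ℝ) /
          (2 * √x / q)) atTop (𝓝 1) := by
  have floor_ratio : Tendsto (fun x : ℝ => √(⌊x⌋₊ : ℝ) / √x) atTop (𝓝 1) := by
    simpa only [Real.sqrt_div (Nat.cast_nonneg _), Real.sqrt_one] using
      (tendsto_nat_floor_div_atTop (R := ℝ)).sqrt
  have h := (((tendsto_card_filter_image_div_modEq hq a).comp
    tendsto_nat_floor_atTop).mul floor_ratio).div_const (2 / q : ℝ)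
  rw [mul_one, div_self (by positivity)] at h
  refine h.congr' ?_
  filter_upwards [eventually_ge_atTop 1] with x hx
  have : 0 < √(⌊x⌋₊ : ℝ) := Real.sqrt_pos.2 (by exact_mod_cast Nat.floor_pos.2 hx)
  simp only [Function.comp_apply, Nat.floor_div_natCast]
  rw [div_mul_div_cancel₀ this.ne', div_div, mul_div_assoc', mul_comm √x]

end Counting

end

open Filter in
theorem heyman_conjecture (q : ℕ) (hq : 0 < q) :
    Tendsto (fun x : ℝ =>
        ((((Finset.Icc 1 ⌊x⌋₊).image (fun n : ℕ => ⌊x / (n : ℝ)⌋₊)).filter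
            (fun m : ℕ => q ∣ m)).card : ℝ) / (2 * Real.sqrt x / q))
      atTop (nhds 1) := by
  simpa only [Nat.modEq_zero_iff_dvd] using heyman_conjecture_general hq 0
end
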